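/- arXiv:2601.14158 — 2 statements merged into one kernel-verified Lean document; each statement's English description precedes it below -/
import Mathlib

section
/- Let d ≥ 3 and let C be a positive semidefinite matrix on ℂ²⊗ℂ^d with eigenvalues λ1 ≥ … ≥ λ_{2d}. Assume that for every unitary U on ℂ²⊗ℂ^d there exists a diagonal matrix D whose diagonal entries are a permutation of the eigenvalues of C (with multiplicity) such that λ(tr_1[UCU*]) ⊕ λ(tr_2[UCU*]) ≺ λ(tr_1[D]) ⊕ λ(tr_2[D]). If rank(C) > 3, then λ3 = λ4 = … = λ_{2d−1}, and moreover one of the following holds: (1) λ2 = λ3; (2) λ2 ≥ 2(d−2)λ3 + λ_{2d}; (3) d = 3 and λ_{2d} = 0. -/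
open Matrix Finset Kronecker
open scoped ComplexOrder

/-- The first partial trace of a matrix on `ℂ^{d1} ⊗ ℂ^{d2}` (index pairs `(i,s)` ordered
lexicographically): `(tr_1 C)_{s,t} = ∑_i C_{(i,s),(i,t)}`. -/
noncomputable def ptrace1 {d1 d2 : ℕ} (C : Matrix (Fin d1 × Fin d2) (Fin d1 × Fin d2) ℂ) :
    Matrix (Fin d2) (Fin d2) ℂ :=
  Matrix.of fun s t => ∑ i : Fin d1, C (i, s) (i, t)

/-- The second partial trace: `(tr_2 C)_{i,j} = ∑_s C_{(i,s),(j,s)}`. -/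
noncomputable def ptrace2 {d1 d2 : ℕ} (C : Matrix (Fin d1 × Fin d2) (Fin d1 × Fin d2) ℂ) :
    Matrix (Fin d1) (Fin d1) ℂ :=
  Matrix.of fun i j => ∑ s : Fin d2, C (i, s) (j, s)

/-- The sum of the `k` largest entries of the vector `x` (the largest value of a sum of `k`
entries of `x`), i.e. `∑_{i=1}^k x_i^↓`. -/
noncomputable def maxSum {ι : Type*} [Fintype ι] (x : ι → ℝ) (k : ℕ) : ℝ :=
  sSup {s : ℝ | ∃ A : Finset ι, A.card = k ∧ s = ∑ i ∈ A, x i}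

/-- `x ≺ y` (majorization): for every `k`, the sum of the `k` largest entries of `x` is at
most the sum of the `k` largest entries of `y`, and the total sums are equal. -/
def Majorizes {ι κ : Type*} [Fintype ι] [Fintype κ] (x : ι → ℝ) (y : κ → ℝ) : Prop :=
  (∀ k : ℕ, maxSum x k ≤ maxSum y k) ∧ ∑ i, x i = ∑ j, y j

/-- `x ≺_w y` (weak majorization). -/
def WeakMajorizes {ι κ : Type*} [Fintype ι] [Fintype κ] (x : ι → ℝ) (y : κ → ℝ) : Prop :=
  ∀ k : ℕ, maxSum x k ≤ maxSum y k

/-! ### Reduction to a combinatorial statement about arrays -/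

namespace QubitQudit

/-- Column sums and row sums of a `2 × d` array. -/
noncomputable def yv {d : ℕ} (E : Fin 2 × Fin d → ℝ) : Fin d ⊕ Fin 2 → ℝ :=
  Sum.elim (fun s => ∑ i, E (i, s)) (fun i => ∑ s, E (i, s))

/-- The array in which the entries at `p` and `q` are partially exchanged. -/
noncomputable def rotE {α : Type*} [DecidableEq α] (E : α → ℝ) (p q : α) (θ : ℝ) : α → ℝ :=
  fun x => if x = p then (1 - θ) * E p + θ * E q
    else if x = q then θ * E p + (1 - θ) * E q else E x

/-- A plane rotation in the coordinates `p`, `q`. -/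
noncomputable def rotW {α : Type*} [DecidableEq α] (p q : α) (c s : ℝ) : Matrix α α ℂ :=
  Matrix.of fun x => if x = p then (fun k => (if k = p then (c : ℂ) else 0) - (if k = q then (s : ℂ) else 0))
    else if x = q then (fun k => (if k = p then (s : ℂ) else 0) + (if k = q then (c : ℂ) else 0))
    else (fun k => if k = x then 1 else 0)

theorem rotW_mul {α : Type*} [Fintype α] [DecidableEq α] (p q : α) (hpq : p ≠ q) (c s : ℝ)
    (hcs : c ^ 2 + s ^ 2 = 1) (E : α → ℝ) (x y : α) :
    (rotW p q c s * Matrix.diagonal (fun z => (E z : ℂ)) * (rotW p q c s)ᴴ) x y =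
      if x = y then (rotE E p q (s ^ 2) x : ℂ)
      else if (x = p ∧ y = q) ∨ (x = q ∧ y = p) then (c * s * (E p - E q) : ℂ) else 0 := by
  have hc : (1 : ℝ) - s ^ 2 = c ^ 2 := by linarith
  have hqp : q ≠ p := hpq.symm
  rw [Matrix.mul_apply]
  simp only [Matrix.mul_diagonal, Matrix.conjTranspose_apply, rotW, Matrix.of_apply, rotE, hc]
  by_cases hxp : x = p
  · subst hxp
    by_cases hyp : y = x
    · subst hyp
      simp [sub_mul, mul_sub, Finset.sum_sub_distrib, hpq, hqp]
      ring
    · by_cases hyq : y = q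
      · subst hyq
        simp [sub_mul, mul_add, Finset.sum_sub_distrib, Finset.sum_add_distrib, hpq, hqp]
        ring
      · have h1 : x ≠ y := fun h => hyp h.symm
        have h2 : q ≠ y := fun h => hyq h.symm
        simp [sub_mul, Finset.sum_sub_distrib, hyp, hyq, h1, h2, hpq, hqp]
  · by_cases hxq : x = q
    · subst hxq
      by_cases hyp : y = p
      · subst hyp
        simp [add_mul, mul_sub, Finset.sum_sub_distrib, Finset.sum_add_distrib, hpq, hqp]
        ring
      · by_cases hyq : y = x
        · subst hyq
          simp [add_mul, mul_add, Finset.sum_add_distrib, hpq, hqp]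
          ring
        · have h1 : x ≠ y := fun h => hyq h.symm
          have h2 : p ≠ y := fun h => hyp h.symm
          simp [add_mul, Finset.sum_add_distrib, hyp, hyq, h1, h2, hpq, hqp]
    · by_cases hyp : y = p
      · subst hyp
        simp [hxp, hxq]
      · by_cases hyq : y = q
        · subst hyq
          simp [hxp, hxq, hqp]
        · by_cases hxy : x = y
          · subst hxy
            simp [hxp, hxq]
          · simp [hxp, hxq, hxy, hyp, hyq, Ne.symm hxy]

theorem rotW_unitary {α : Type*} [Fintype α] [DecidableEq α] (p q : α) (hpq : p ≠ q) (c s : ℝ)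
    (hcs : c ^ 2 + s ^ 2 = 1) : rotW p q c s * (rotW p q c s)ᴴ = 1 := by
  have h := rotW_mul p q hpq c s hcs (fun _ => (1 : ℝ))
  ext x y
  have h1 := h x y
  have h2 : (Matrix.diagonal (fun _ : α => ((1 : ℝ) : ℂ))) = 1 := by
    simp
  rw [h2, mul_one] at h1
  rw [h1, Matrix.one_apply]
  by_cases hxy : x = y
  · subst hxy
    simp only [if_true, rotE]
    split_ifs <;> simp
  · simp [hxy]

theorem exists_equiv_of_map_eq {α γ : Type*} [Fintype α] [DecidableEq γ] (f h : α → γ)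
    (H : Multiset.map f Finset.univ.val = Multiset.map h Finset.univ.val) :
    ∃ e : α ≃ α, ∀ x, h (e x) = f x := by
  classical
  have key : ∀ c : γ, Nonempty ({a // f a = c} ≃ {a // h a = c}) := by
    intro c
    refine ⟨Fintype.equivOfCardEq ?_⟩
    have := congrArg (Multiset.count c) H
    rw [Multiset.count_map, Multiset.count_map] at this
    rw [Fintype.card_subtype, Fintype.card_subtype]
    simpa [Finset.card_def, Finset.filter_val, eq_comm] using this
  have e := fun c => Classical.choice (key c)
  exact ⟨Equiv.ofFiberEquiv e, fun x => Equiv.ofFiberEquiv_map e x⟩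

theorem eigenvalues_diag {n : Type*} [Fintype n] [DecidableEq n] (A : Matrix n n ℂ)
    (hA : A.IsHermitian) (f : n → ℝ) (h : A = Matrix.diagonal (fun x => (f x : ℂ))) :
    ∃ e : n ≃ n, ∀ x, f (e x) = hA.eigenvalues x := by
  apply exists_equiv_of_map_eq
  have h1 := hA.roots_charpoly_eq_eigenvalues
  have h2 : A.charpoly.roots = Multiset.map (fun x => (f x : ℂ)) Finset.univ.val := by
    rw [h, Matrix.charpoly_diagonal, Polynomial.roots_prod]
    · simp
    · simp [Finset.prod_ne_zero_iff, Polynomial.X_sub_C_ne_zero]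
  have h3 := h1.symm.trans h2
  have := congrArg (Multiset.map Complex.re) h3
  simpa [Multiset.map_map, Function.comp_def] using this

theorem maxSum_equiv {ι κ : Type*} [Fintype ι] [Fintype κ] (e : ι ≃ κ) (x : κ → ℝ) (k : ℕ) :
    maxSum (fun i => x (e i)) k = maxSum x k := by
  unfold maxSum
  congr 1
  ext r
  constructor
  · rintro ⟨A, hA, rfl⟩
    exact ⟨A.map e.toEmbedding, by simpa using hA, by simp⟩
  · rintro ⟨A, hA, rfl⟩
    exact ⟨A.map e.symm.toEmbedding, by simpa using hA, by simp⟩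

theorem majorizes_equiv {ι κ : Type*} [Fintype ι] [Fintype κ] (x x' : ι → ℝ) (y y' : κ → ℝ)
    (e : ι ≃ ι) (e' : κ ≃ κ) (h : ∀ i, x (e i) = x' i) (h' : ∀ i, y (e' i) = y' i)
    (H : Majorizes x' y') : Majorizes x y := by
  obtain rfl : (fun i => x (e i)) = x' := funext h
  obtain rfl : (fun i => y (e' i)) = y' := funext h'
  refine ⟨fun k => ?_, ?_⟩
  · have := H.1 k
    rwa [maxSum_equiv, maxSum_equiv] at this
  · have := H.2
    rwa [Equiv.sum_comp e x, Equiv.sum_comp e' y] at this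

theorem yv_eigen {d : ℕ} (M : Matrix (Fin 2 × Fin d) (Fin 2 × Fin d) ℂ) (E : Fin 2 × Fin d → ℝ)
    (hdiag : ∀ x, M x x = E x)
    (h1 : ∀ i s t, s ≠ t → M (i, s) (i, t) = 0) (h2 : ∀ i j s, i ≠ j → M (i, s) (j, s) = 0) :
    ∃ (hM1 : (ptrace1 M).IsHermitian) (hM2 : (ptrace2 M).IsHermitian)
      (e : (Fin d ⊕ Fin 2) ≃ (Fin d ⊕ Fin 2)),
      ∀ v, yv E (e v) = Sum.elim hM1.eigenvalues hM2.eigenvalues v := by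
  have e1 : ptrace1 M = Matrix.diagonal (fun s => ((∑ i, E (i, s) : ℝ) : ℂ)) := by
    ext s t
    by_cases hst : s = t
    · subst hst
      simp [ptrace1, hdiag]
    · simp [ptrace1, hst, h1 _ _ _ hst]
  have e2 : ptrace2 M = Matrix.diagonal (fun i => ((∑ s, E (i, s) : ℝ) : ℂ)) := by
    ext i j
    by_cases hij : i = j
    · subst hij
      simp [ptrace2, hdiag]
    · simp [ptrace2, hij, h2 _ _ _ hij]
  have hM1 : (ptrace1 M).IsHermitian := by
    rw [e1]
    exact Matrix.isHermitian_diagonal_of_self_adjoint _ (by ext; simp)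
  have hM2 : (ptrace2 M).IsHermitian := by
    rw [e2]
    exact Matrix.isHermitian_diagonal_of_self_adjoint _ (by ext; simp)
  obtain ⟨f1, hf1⟩ := eigenvalues_diag _ hM1 _ e1
  obtain ⟨f2, hf2⟩ := eigenvalues_diag _ hM2 _ e2
  refine ⟨hM1, hM2, Equiv.sumCongr f1 f2, ?_⟩
  rintro (v | v)
  · simpa [yv] using hf1 v
  · simpa [yv] using hf2 v

theorem reduction (d : ℕ)
    (C : Matrix (Fin 2 × Fin d) (Fin 2 × Fin d) ℂ) (hC : C.PosSemidef)
    (μ : Fin (2 * d) → ℝ)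
    (g : Fin (2 * d) ≃ Fin 2 × Fin d) (hg : ∀ k, μ k = hC.1.eigenvalues (g k))
    (hmaj : ∀ U : Matrix (Fin 2 × Fin d) (Fin 2 × Fin d) ℂ,
      U ∈ Matrix.unitaryGroup (Fin 2 × Fin d) ℂ →
      ∃ D : Matrix (Fin 2 × Fin d) (Fin 2 × Fin d) ℂ, D.IsDiag ∧
        (∃ gp : Equiv.Perm (Fin 2 × Fin d), ∀ p, D p p = (hC.1.eigenvalues (gp p) : ℂ)) ∧
        ∀ (hU1 : (ptrace1 (U * C * Uᴴ)).IsHermitian)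
          (hU2 : (ptrace2 (U * C * Uᴴ)).IsHermitian)
          (hD1 : (ptrace1 D).IsHermitian) (hD2 : (ptrace2 D).IsHermitian),
          Majorizes (Sum.elim hU1.eigenvalues hU2.eigenvalues)
            (Sum.elim hD1.eigenvalues hD2.eigenvalues))
    (σ : Fin 2 × Fin d ≃ Fin (2 * d)) (i j : Fin 2) (s t : Fin d) (hij : i ≠ j) (hst : s ≠ t)
    (θ : ℝ) (h0 : 0 ≤ θ) (h1 : θ ≤ 1) :
    ∃ σ' : Fin 2 × Fin d ≃ Fin (2 * d),
      Majorizes (yv (rotE (fun x => μ (σ x)) (i, s) (j, t) θ)) (yv (fun x => μ (σ' x))) := by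
  have hpq : ((i, s) : Fin 2 × Fin d) ≠ (j, t) := fun h => hij (congrArg Prod.fst h)
  set W := rotW ((i, s) : Fin 2 × Fin d) (j, t) (√(1 - θ)) (√θ) with hW
  have hcs : √(1 - θ) ^ 2 + √θ ^ 2 = 1 := by
    rw [Real.sq_sqrt (by linarith), Real.sq_sqrt h0]; ring
  have hWW : W * Wᴴ = 1 := rotW_unitary _ _ hpq _ _ hcs
  set π : Equiv.Perm (Fin 2 × Fin d) := σ.trans g with hπ
  set V : Matrix (Fin 2 × Fin d) (Fin 2 × Fin d) ℂ := hC.1.eigenvectorUnitary.1 with hV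
  have hVV : Vᴴ * V = 1 := by
    have := hC.1.eigenvectorUnitary.2
    rw [Matrix.mem_unitaryGroup_iff'] at this
    exact this
  have hspec : C = V * Matrix.diagonal (fun z => (hC.1.eigenvalues z : ℂ)) * Vᴴ := by
    have := hC.1.spectral_theorem
    rw [Unitary.conjStarAlgAut_apply] at this
    exact this
  set V' := V.submatrix id π with hV'
  have hE : (fun x => (hC.1.eigenvalues (π x) : ℂ)) = fun x => ((μ (σ x) : ℝ) : ℂ) := by
    funext x
    simp [hπ, hg]
  have hV'V' : V'ᴴ * V' = 1 := by
    have : V'ᴴ * V' = (Vᴴ * V).submatrix π π := by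
      ext x y
      simp [hV', Matrix.mul_apply]
    rw [this, hVV, Matrix.submatrix_one_equiv]
  have hC' : C = V' * Matrix.diagonal (fun x => ((μ (σ x) : ℝ) : ℂ)) * V'ᴴ := by
    rw [← hE]
    conv_lhs => rw [hspec]
    ext x y
    rw [Matrix.mul_apply, Matrix.mul_apply]
    simp only [Matrix.mul_diagonal, hV', Matrix.submatrix_apply,
      Matrix.conjTranspose_apply, id]
    exact (Equiv.sum_comp π (fun z => V x z * (hC.1.eigenvalues z : ℂ) * star (V y z))).symm
  have hUC : (W * V'ᴴ) * C * (W * V'ᴴ)ᴴ =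
      W * Matrix.diagonal (fun x => ((μ (σ x) : ℝ) : ℂ)) * Wᴴ := by
    rw [hC', Matrix.conjTranspose_mul, Matrix.conjTranspose_conjTranspose]
    calc _ = W * (V'ᴴ * V') * Matrix.diagonal (fun x => ((μ (σ x) : ℝ) : ℂ)) * (V'ᴴ * V') * Wᴴ := by
          simp only [Matrix.mul_assoc]
      _ = _ := by rw [hV'V']; simp
  have hV'V2 : V' * V'ᴴ = 1 := mul_eq_one_comm.mp hV'V'
  obtain ⟨D, hD, ⟨gp, hgp⟩, hM⟩ := hmaj (W * V'ᴴ) (by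
    rw [Matrix.mem_unitaryGroup_iff, Matrix.star_eq_conjTranspose, Matrix.conjTranspose_mul,
      Matrix.conjTranspose_conjTranspose]
    calc _ = W * (V'ᴴ * V') * Wᴴ := by simp only [Matrix.mul_assoc]
      _ = 1 := by rw [hV'V']; simpa using hWW)
  rw [hUC] at hM
  have hent := rotW_mul _ _ hpq _ _ hcs (fun x => μ (σ x))
  rw [Real.sq_sqrt h0] at hent
  obtain ⟨a1, a2, e, he⟩ := yv_eigen (W * Matrix.diagonal (fun x => ((μ (σ x) : ℝ) : ℂ)) * Wᴴ)
    (rotE (fun x => μ (σ x)) (i, s) (j, t) θ)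
    (fun x => by rw [hent]; simp)
    (fun i' s' t' h => by
      rw [hent]
      have : ¬ (((i', s') = (i, s) ∧ (i', t') = (j, t)) ∨ ((i', s') = (j, t) ∧ (i', t') = (i, s))) := by
        simp only [Prod.mk.injEq]
        rintro (⟨⟨rfl, _⟩, ⟨h', _⟩⟩ | ⟨⟨rfl, _⟩, ⟨h', _⟩⟩)
        · exact hij h'
        · exact hij h'.symm
      simp only [this, if_false]
      simp [h])
    (fun i' j' s' h => by
      rw [hent]
      have : ¬ (((i', s') = (i, s) ∧ (j', s') = (j, t)) ∨ ((i', s') = (j, t) ∧ (j', s') = (i, s))) := by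
        simp only [Prod.mk.injEq]
        rintro (⟨⟨_, rfl⟩, ⟨_, h'⟩⟩ | ⟨⟨_, rfl⟩, ⟨_, h'⟩⟩)
        · exact hst h'
        · exact hst h'.symm
      simp only [this, if_false]
      simp [h])
  obtain ⟨b1, b2, e', he'⟩ := yv_eigen D (fun x => μ ((gp.trans g.symm) x))
    (fun x => by rw [hgp, hg]; simp)
    (fun i' s' t' h => hD (by simpa using h))
    (fun i' j' s' h => hD (by simpa using h))
  exact ⟨gp.trans g.symm, majorizes_equiv _ _ _ _ e e' he he' (hM a1 a2 b1 b2)⟩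

theorem maj_up {ι : Type*} [Fintype ι] {x y : ι → ℝ} (h : Majorizes x y) (A : Finset ι) :
    ∃ B : Finset ι, B.card = A.card ∧ ∑ i ∈ A, x i ≤ ∑ i ∈ B, y i := by
  have fin : ∀ z : ι → ℝ, {s : ℝ | ∃ B : Finset ι, B.card = A.card ∧ s = ∑ i ∈ B, z i}.Finite := by
    intro z
    refine (Set.finite_range (fun B : Finset ι => ∑ i ∈ B, z i)).subset ?_
    rintro s ⟨B, _, rfl⟩
    exact ⟨B, rfl⟩
  have h1 := h.1 A.card
  have h2 : maxSum y A.card ∈ {s : ℝ | ∃ B : Finset ι, B.card = A.card ∧ s = ∑ i ∈ B, y i} :=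
    Set.Nonempty.csSup_mem ⟨_, A, rfl, rfl⟩ (fin y)
  obtain ⟨B, hB, hB'⟩ := h2
  refine ⟨B, hB, ?_⟩
  rw [← hB']
  exact (le_csSup (fin x).bddAbove ⟨A, rfl, rfl⟩).trans h1

theorem maj_down {ι : Type*} [Fintype ι] {x y : ι → ℝ} (h : Majorizes x y) (A : Finset ι) :
    ∃ B : Finset ι, B.card = A.card ∧ ∑ i ∈ B, y i ≤ ∑ i ∈ A, x i := by
  classical
  obtain ⟨B, hB, hB'⟩ := maj_up h Aᶜ
  refine ⟨Bᶜ, ?_, ?_⟩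
  · rw [Finset.card_compl, hB, Finset.card_compl]
    have := Finset.card_le_univ A
    omega
  · have h1 := Finset.sum_add_sum_compl A x
    have h2 := Finset.sum_add_sum_compl B y
    have := h.2
    linarith

/-! ### Elementary facts about row and column sums -/

theorem rotE_eq {α : Type*} [DecidableEq α] (E : α → ℝ) (p q : α) (hpq : p ≠ q) (θ : ℝ) (x : α) :
    rotE E p q θ x = E x + θ * (E q - E p) *
      ((if x = p then (1 : ℝ) else 0) - (if x = q then (1 : ℝ) else 0)) := by
  unfold rotE
  by_cases h : x = p
  · subst h
    simp [hpq]
    ring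
  · by_cases h' : x = q
    · subst h'
      simp [h]
      ring
    · simp [h, h']

/-- The direction of the exchange. -/
noncomputable def dir {α : Type*} [DecidableEq α] (p q : α) : α → ℝ :=
  fun x => (if x = p then (1 : ℝ) else 0) - (if x = q then (1 : ℝ) else 0)

theorem yv_rot {d : ℕ} (E : Fin 2 × Fin d → ℝ) (p q : Fin 2 × Fin d) (hpq : p ≠ q) (θ : ℝ)
    (v : Fin d ⊕ Fin 2) :
    yv (rotE E p q θ) v = yv E v + θ * (E q - E p) * yv (dir p q) v := by
  rcases v with v | v <;>
  simp only [yv, Sum.elim_inl, Sum.elim_inr, rotE_eq E p q hpq, Finset.sum_add_distrib,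
    Finset.mul_sum, dir]

theorem yv_dir_row {d : ℕ} (i j : Fin 2) (s t : Fin d) (hij : i ≠ j) :
    yv (dir (i, s) (j, t)) (Sum.inr i) = 1 := by
  simp [yv, dir, hij, Finset.filter_eq']

theorem yv_dir_col {d : ℕ} (i j : Fin 2) (s t r : Fin d) :
    yv (dir (i, s) (j, t)) (Sum.inl r) = (if r = s then 1 else 0) - (if r = t then 1 else 0) := by
  simp [yv, dir, Finset.sum_sub_distrib, ite_and]

theorem sum_yv {d : ℕ} (E : Fin 2 × Fin d → ℝ) (B : Finset (Fin d ⊕ Fin 2)) :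
    ∑ v ∈ B, yv E v = ∑ x ∈ Finset.univ ×ˢ B.toLeft, E x + ∑ x ∈ B.toRight ×ˢ Finset.univ, E x := by
  conv_lhs => rw [← Finset.toLeft_disjSum_toRight (u := B)]
  rw [Finset.sum_disjSum, Finset.sum_product_right, Finset.sum_product]
  rfl

theorem fin2_finset (R : Finset (Fin 2)) (i : Fin 2) (hi : i ∈ R) : R = {i} ∨ R = Finset.univ := by
  revert R i
  decide

theorem cover {d : ℕ} (E : Fin 2 × Fin d → ℝ) (hE : ∀ x, 0 ≤ E x) (B : Finset (Fin d ⊕ Fin 2))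
    (i : Fin 2) (hi : Sum.inr i ∈ B) (hB : B.card ≤ d + 1) :
    ∃ A : Finset (Fin 2 × Fin d), d + B.card ≤ A.card + 1 ∧ (∀ s, (i, s) ∈ A) ∧
      ∑ x ∈ A, E x ≤ ∑ v ∈ B, yv E v := by
  classical
  have hi' : i ∈ B.toRight := by simpa using hi
  have hcard := Finset.card_toLeft_add_card_toRight (u := B)
  rw [sum_yv]
  rcases fin2_finset _ _ hi' with h | h
  · rw [h] at hcard ⊢
    simp only [Finset.card_singleton] at hcard
    refine ⟨(Finset.univ ×ˢ B.toLeft) ∪ ({i} ×ˢ Finset.univ), ?_, ?_, ?_⟩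
    · have h1 := Finset.card_union_add_card_inter ((Finset.univ : Finset (Fin 2)) ×ˢ B.toLeft)
        ({i} ×ˢ Finset.univ)
      have h2 : ((Finset.univ : Finset (Fin 2)) ×ˢ B.toLeft) ∩ ({i} ×ˢ Finset.univ)
          = {i} ×ˢ B.toLeft := by
        ext ⟨a, b⟩
        simp [and_comm]
      rw [h2] at h1
      simp only [Finset.card_product, Finset.card_univ, Fintype.card_fin, Finset.card_singleton] at h1
      omega
    · intro s
      simp
    · have := Finset.sum_union_inter (s₁ := (Finset.univ : Finset (Fin 2)) ×ˢ B.toLeft)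
        (s₂ := {i} ×ˢ Finset.univ) (f := E)
      have h3 : 0 ≤ ∑ x ∈ ((Finset.univ : Finset (Fin 2)) ×ˢ B.toLeft) ∩ ({i} ×ˢ Finset.univ), E x :=
        Finset.sum_nonneg (fun x _ => hE x)
      linarith
  · rw [h]
    refine ⟨Finset.univ, ?_, fun s => Finset.mem_univ _, ?_⟩
    · simp
      omega
    · have h3 : 0 ≤ ∑ x ∈ (Finset.univ : Finset (Fin 2)) ×ˢ B.toLeft, E x :=
        Finset.sum_nonneg (fun x _ => hE x)
      rw [Finset.univ_product_univ]
      linarith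

theorem low_aux {α : Type*} [Fintype α] (f : α → ℝ) (A : Finset α) :
    ∑ x, min (f x) 0 ≤ ∑ x ∈ A, f x := by
  classical
  rw [← Finset.sum_add_sum_compl A (fun x => min (f x) 0)]
  have h1 : ∑ x ∈ A, min (f x) 0 ≤ ∑ x ∈ A, f x := Finset.sum_le_sum (fun x _ => min_le_left _ _)
  have h2 : ∑ x ∈ Aᶜ, min (f x) 0 ≤ 0 := Finset.sum_nonpos (fun x _ => min_le_right _ _)
  linarith

theorem low_eq {α : Type*} [Fintype α] (f : α → ℝ) (A : Finset α)
    (h : ∑ x ∈ A, f x ≤ ∑ x, min (f x) 0) :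
    (∀ x ∈ A, f x ≤ 0) ∧ (∀ x, x ∉ A → 0 ≤ f x) := by
  classical
  rw [← Finset.sum_add_sum_compl A (fun x => min (f x) 0)] at h
  have h1 : ∑ x ∈ A, min (f x) 0 ≤ ∑ x ∈ A, f x := Finset.sum_le_sum (fun x _ => min_le_left _ _)
  have h2 : ∑ x ∈ Aᶜ, min (f x) 0 ≤ 0 := Finset.sum_nonpos (fun x _ => min_le_right _ _)
  constructor
  · intro x hx
    by_contra hc
    have : ∑ x ∈ A, min (f x) 0 < ∑ x ∈ A, f x :=
      Finset.sum_lt_sum (fun x _ => min_le_left _ _) ⟨x, hx, by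
        push Not at hc
        rwa [min_eq_right hc.le]⟩
    linarith
  · intro x hx
    by_contra hc
    have : ∑ x ∈ Aᶜ, min (f x) 0 < ∑ x ∈ Aᶜ, (0 : ℝ) :=
      Finset.sum_lt_sum (fun x _ => min_le_right _ _) ⟨x, by simpa using hx, by
        push Not at hc
        rwa [min_eq_left hc.le]⟩
    simp only [Finset.sum_const_zero] at this
    linarith

/-- Lower bound for the sum over a set of cells. -/
theorem low {d : ℕ} (μ : Fin (2 * d) → ℝ) (σ : Fin 2 × Fin d ≃ Fin (2 * d)) (c : ℝ)
    (A : Finset (Fin 2 × Fin d)) :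
    A.card * c + ∑ k, min (μ k - c) 0 ≤ ∑ x ∈ A, μ (σ x) := by
  have h := low_aux (fun x => μ (σ x) - c) A
  rw [Equiv.sum_comp σ (fun k => min (μ k - c) 0)] at h
  rw [Finset.sum_sub_distrib] at h
  simp only [Finset.sum_const, nsmul_eq_mul] at h
  linarith

theorem low_tight {d : ℕ} (μ : Fin (2 * d) → ℝ) (σ : Fin 2 × Fin d ≃ Fin (2 * d)) (c : ℝ)
    (A : Finset (Fin 2 × Fin d))
    (h : ∑ x ∈ A, μ (σ x) ≤ A.card * c + ∑ k, min (μ k - c) 0) :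
    (∀ x ∈ A, μ (σ x) ≤ c) ∧ (∀ x, x ∉ A → c ≤ μ (σ x)) := by
  have h' := low_eq (fun x => μ (σ x) - c) A (by
    rw [Equiv.sum_comp σ (fun k => min (μ k - c) 0), Finset.sum_sub_distrib]
    simp only [Finset.sum_const, nsmul_eq_mul]
    linarith)
  exact ⟨fun x hx => by linarith [h'.1 x hx], fun x hx => by linarith [h'.2 x hx]⟩

theorem tail_eq {d : ℕ} (hd : 3 ≤ d) (μ : Fin (2 * d) → ℝ) (c : ℝ)
    (h1 : ∀ k : Fin (2 * d), (k : ℕ) < 4 → c ≤ μ k) (h2 : ∀ k : Fin (2 * d), 4 ≤ (k : ℕ) → μ k ≤ c) :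
    ∑ k, min (μ k - c) 0 = ∑ k ∈ Finset.univ.filter (fun k : Fin (2 * d) => 4 ≤ (k : ℕ)), μ k
      - (2 * (d : ℝ) - 4) * c := by
  have h3 : ∑ k, min (μ k - c) 0
      = ∑ k ∈ Finset.univ.filter (fun k : Fin (2 * d) => 4 ≤ (k : ℕ)), (μ k - c) := by
    rw [Finset.sum_filter]
    refine Finset.sum_congr rfl fun k _ => ?_
    split_ifs with hk
    · exact min_eq_left (by linarith [h2 k hk])
    · exact min_eq_right (by linarith [h1 k (by omega)])
  have h4 : (Finset.univ.filter (fun k : Fin (2 * d) => 4 ≤ (k : ℕ))) = Finset.Ici ⟨4, by omega⟩ := by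
    ext k
    simp [Fin.le_def]
  have h5 : (Finset.univ.filter (fun k : Fin (2 * d) => 4 ≤ (k : ℕ))).card = 2 * d - 4 := by
    rw [h4, Fin.card_Ici]
  rw [h3, Finset.sum_sub_distrib]
  simp only [Finset.sum_const, nsmul_eq_mul, h5]
  rw [Nat.cast_sub (by omega)]
  push_cast
  ring

theorem col_le {d : ℕ} (hd : 3 ≤ d) (μ : Fin (2 * d) → ℝ) (hμ : Antitone μ)
    (σ : Fin 2 × Fin d ≃ Fin (2 * d)) (s : Fin d) :
    yv (fun x => μ (σ x)) (Sum.inl s) ≤ μ ⟨0, by omega⟩ + μ ⟨1, by omega⟩ := by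
  simp only [yv, Sum.elim_inl, Fin.sum_univ_two]
  have hne : σ (0, s) ≠ σ (1, s) := fun h => by
    have := σ.injective h
    simp at this
  have hne' : (σ (0, s) : ℕ) ≠ (σ (1, s) : ℕ) := fun h => hne (Fin.ext h)
  have hz : ∀ k, μ k ≤ μ ⟨0, by omega⟩ := fun k => hμ (by simp [Fin.le_def])
  have ho : ∀ k : Fin (2 * d), 1 ≤ (k : ℕ) → μ k ≤ μ ⟨1, by omega⟩ := fun k h => hμ (by simpa [Fin.le_def] using h)
  by_cases h : (σ (0, s) : ℕ) = 0
  · have := hz (σ (0, s))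
    have := ho (σ (1, s)) (by omega)
    linarith
  · have := hz (σ (1, s))
    have := ho (σ (0, s)) (by omega)
    linarith

/-- The arrangement of the eigenvalues in consecutive pairs in columns. -/
def pairing (d : ℕ) : Fin 2 × Fin d ≃ Fin (2 * d) :=
  ((Equiv.prodComm (Fin 2) (Fin d)).trans finProdFinEquiv).trans (finCongr (mul_comm d 2))

theorem pairing_val {d : ℕ} (i : Fin 2) (s : Fin d) :
    ((pairing d (i, s) : Fin (2 * d)) : ℕ) = i + 2 * s := by
  simp [pairing]

/-! ### The middle eigenvalues coincide -/

/-- Arrangements whose lowest sums are as small as possible. -/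
def Tight {d : ℕ} (μ : Fin (2 * d) → ℝ) (K1 K2 : ℝ) (σ : Fin 2 × Fin d ≃ Fin (2 * d)) : Prop :=
  (∃ B : Finset (Fin d ⊕ Fin 2), B.card = d - 2 ∧ ∑ v ∈ B, yv (fun x => μ (σ x)) v ≤ K2) ∧
    ∃ v, yv (fun x => μ (σ x)) v ≤ K1

theorem le_of_frequent (X Y M : ℝ) (S : Set ℕ) (hS : S.Infinite)
    (h : ∀ n ∈ S, X ≤ Y + 1 / ((n : ℝ) + 1) * M) : X ≤ Y := by
  have h1 : Filter.Tendsto (fun n : ℕ => Y + 1 / ((n : ℝ) + 1) * M) Filter.atTop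
      (nhds (Y + 0 * M)) :=
    (tendsto_one_div_add_atTop_nhds_zero_nat.mul_const M).const_add Y
  have h2 : X ≤ Y + 0 * M := by
    by_contra hlt
    push Not at hlt
    obtain ⟨n, hn1, hn2⟩ :=
      ((Nat.frequently_atTop_iff_infinite.mpr hS).and_eventually (h1.eventually_lt_const hlt)).exists
    exact absurd (h n hn1) (not_le.mpr hn2)
  simpa using h2

theorem exists_tight {d : ℕ} (hd : 3 ≤ d) (μ : Fin (2 * d) → ℝ) (hpos : ∀ k, 0 ≤ μ k) :
    ∃ σ, Tight μ (μ ⟨2 * d - 2, by omega⟩ + μ ⟨2 * d - 1, by omega⟩)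
      (∑ k ∈ Finset.univ.filter (fun k : Fin (2 * d) => 4 ≤ (k : ℕ)), μ k) σ ∧
      μ ⟨0, by omega⟩ + μ ⟨1, by omega⟩ ≤ yv (fun x => μ (σ x)) (Sum.inr 0) := by
  classical
  set k1 : Fin (2 * d) := ⟨1, by omega⟩ with hk1
  set k2 : Fin (2 * d) := ⟨2, by omega⟩ with hk2
  set σ : Fin 2 × Fin d ≃ Fin (2 * d) := (pairing d).trans (Equiv.swap k1 k2) with hσ
  have hbig : ∀ (i : Fin 2) (s : Fin d), 3 ≤ (i : ℕ) + 2 * (s : ℕ) → (σ (i, s) : ℕ) = i + 2 * s := by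
    intro i s h
    have hv := pairing_val i s
    rw [hσ, Equiv.trans_apply, Equiv.swap_apply_of_ne_of_ne, hv]
    · intro h'
      rw [h', hk1] at hv
      simp only at hv
      omega
    · intro h'
      rw [h', hk2] at hv
      simp only at hv
      omega
  have h00 : σ (0, ⟨0, by omega⟩) = ⟨0, by omega⟩ := by
    have : pairing d (0, ⟨0, by omega⟩) = ⟨0, by omega⟩ := Fin.ext (by rw [pairing_val]; simp)
    rw [hσ, Equiv.trans_apply, this, Equiv.swap_apply_of_ne_of_ne] <;> simp [hk1, hk2]
  have h01 : σ (0, ⟨1, by omega⟩) = k1 := by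
    have : pairing d (0, ⟨1, by omega⟩) = k2 := Fin.ext (by rw [pairing_val]; simp [hk2])
    rw [hσ, Equiv.trans_apply, this, Equiv.swap_apply_right]
  have h10 : σ (1, ⟨0, by omega⟩) = k2 := by
    have : pairing d (1, ⟨0, by omega⟩) = k1 := Fin.ext (by rw [pairing_val]; simp [hk1])
    rw [hσ, Equiv.trans_apply, this, Equiv.swap_apply_left]
  refine ⟨σ, ⟨⟨(Finset.univ.filter (fun s : Fin d => 2 ≤ (s : ℕ))).disjSum ∅, ?_, ?_⟩,
    Sum.inl ⟨d - 1, by omega⟩, ?_⟩, ?_⟩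
  · have h4 : (Finset.univ.filter (fun k : Fin d => 2 ≤ (k : ℕ))) = Finset.Ici ⟨2, by omega⟩ := by
      ext k
      simp [Fin.le_def]
    rw [Finset.card_disjSum, h4, Fin.card_Ici]
    simp
  · rw [sum_yv, Finset.toLeft_disjSum, Finset.toRight_disjSum]
    simp only [Finset.empty_product, Finset.sum_empty, add_zero]
    refine le_of_eq (Finset.sum_equiv σ ?_ (fun _ _ => rfl))
    rintro ⟨i, s⟩
    simp only [Finset.mem_product, Finset.mem_univ, true_and, Finset.mem_filter]
    by_cases hc : 3 ≤ (i : ℕ) + 2 * (s : ℕ)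
    · rw [hbig i s hc]
      omega
    · have hs : (s : ℕ) = 0 ∨ ((s : ℕ) = 1 ∧ i = 0) := by omega
      rcases hs with hs | ⟨hs, rfl⟩
      · have hs' : s = ⟨0, by omega⟩ := Fin.ext hs
        rw [hs']
        fin_cases i
        · simp [h00]
        · simp [h10, hk2]
      · have hs' : s = ⟨1, by omega⟩ := Fin.ext hs
        rw [hs']
        simp [h01, hk1]
  · simp only [yv, Sum.elim_inl, Fin.sum_univ_two]
    have e1 : σ (0, ⟨d - 1, by omega⟩) = ⟨2 * d - 2, by omega⟩ :=
      Fin.ext (by rw [hbig _ _ (by simp; omega)]; simp; omega)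
    have e2 : σ (1, ⟨d - 1, by omega⟩) = ⟨2 * d - 1, by omega⟩ :=
      Fin.ext (by rw [hbig _ _ (by simp; omega)]; simp; omega)
    rw [e1, e2]
  · simp only [yv, Sum.elim_inr]
    have := Finset.sum_le_sum_of_subset_of_nonneg (f := fun s => μ (σ (0, s)))
      (Finset.subset_univ {(⟨0, by omega⟩ : Fin d), ⟨1, by omega⟩}) (fun _ _ _ => hpos _)
    rw [Finset.sum_pair (by simp), h00, h01] at this
    exact this

theorem part1 {d : ℕ} (hd : 3 ≤ d) (μ : Fin (2 * d) → ℝ) (hμ : Antitone μ) (hpos : ∀ k, 0 ≤ μ k)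
    (h3 : 0 < μ ⟨3, by omega⟩)
    (H : ∀ (σ : Fin 2 × Fin d ≃ Fin (2 * d)) (i j : Fin 2) (s t : Fin d), i ≠ j → s ≠ t →
      ∀ θ : ℝ, 0 ≤ θ → θ ≤ 1 → ∃ σ' : Fin 2 × Fin d ≃ Fin (2 * d),
      Majorizes (yv (rotE (fun x => μ (σ x)) (i, s) (j, t) θ)) (yv (fun x => μ (σ' x)))) :
    μ ⟨2, by omega⟩ ≤ μ ⟨2 * d - 2, by omega⟩ := by
  classical
  set K1 := μ ⟨2 * d - 2, by omega⟩ + μ ⟨2 * d - 1, by omega⟩ with hK1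
  set K2 := ∑ k ∈ Finset.univ.filter (fun k : Fin (2 * d) => 4 ≤ (k : ℕ)), μ k with hK2
  obtain ⟨σ1, hσ1, hσ1'⟩ := exists_tight hd μ hpos
  obtain ⟨⟨σ, i⟩, hT, hmax⟩ := Set.exists_max_image
    {p : (Fin 2 × Fin d ≃ Fin (2 * d)) × Fin 2 | Tight μ K1 K2 p.1}
    (fun p => yv (fun x => μ (p.1 x)) (Sum.inr p.2)) (Set.toFinite _) ⟨(σ1, 0), hσ1⟩
  simp only [Set.mem_ofPred_eq, Prod.forall] at hT hmax
  set R := yv (fun x => μ (σ x)) (Sum.inr i) with hR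
  have hR0 : μ ⟨0, by omega⟩ + μ ⟨1, by omega⟩ ≤ R := hσ1'.trans (hmax σ1 0 hσ1)
  -- no exchange can raise the sum of row `i`
  have key : ∀ j s t, i ≠ j → s ≠ t → μ (σ (j, t)) ≤ μ (σ (i, s)) := by
    intro j s t hij hst
    by_contra hlt
    push Not at hlt
    have hpq : ((i, s) : Fin 2 × Fin d) ≠ (j, t) := fun h => hij (congrArg Prod.fst h)
    obtain ⟨⟨B, hB, hB'⟩, v, hv⟩ := hT
    set δ := μ (σ (j, t)) - μ (σ (i, s)) with hδ
    have hδ0 : 0 < δ := by linarith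
    have step : ∀ n : ℕ, ∃ q : (Fin 2 × Fin d ≃ Fin (2 * d)) × Finset (Fin d ⊕ Fin 2) × (Fin d ⊕ Fin 2),
        (q.2.1.card = d - 2 ∧ ∑ w ∈ q.2.1, yv (fun x => μ (q.1 x)) w ≤
          K2 + 1 / ((n : ℝ) + 1) * (δ * ∑ w ∈ B, yv (dir (i, s) (j, t)) w)) ∧
        yv (fun x => μ (q.1 x)) q.2.2 ≤ K1 + 1 / ((n : ℝ) + 1) * (δ * yv (dir (i, s) (j, t)) v) ∧
        ∃ w, R < yv (fun x => μ (q.1 x)) w := by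
      intro n
      have hn : (0 : ℝ) < 1 / ((n : ℝ) + 1) := by positivity
      have hn1 : 1 / ((n : ℝ) + 1) ≤ 1 := by
        rw [div_le_one (by positivity)]
        have : (0 : ℝ) ≤ n := Nat.cast_nonneg n
        linarith
      obtain ⟨σ', hσ'⟩ := H σ i j s t hij hst _ hn.le hn1
      obtain ⟨B2, hB2, hB2'⟩ := maj_down hσ' B
      obtain ⟨B3, hB3, hB3'⟩ := maj_down hσ' {v}
      obtain ⟨B4, hB4, hB4'⟩ := maj_up hσ' {Sum.inr i}
      rw [Finset.card_singleton, Finset.card_eq_one] at hB3 hB4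
      obtain ⟨v3, rfl⟩ := hB3
      obtain ⟨v4, rfl⟩ := hB4
      simp only [Finset.sum_singleton, yv_rot _ _ _ hpq] at hB3' hB4'
      simp only [yv_rot _ _ _ hpq, Finset.sum_add_distrib, ← Finset.mul_sum] at hB2'
      rw [yv_dir_row _ _ _ _ hij] at hB4'
      refine ⟨(σ', B2, v3), ⟨hB2.trans hB, ?_⟩, ?_, v4, ?_⟩
      · simp only
        rw [← hδ] at hB2'
        linarith
      · simp only
        rw [← hδ] at hB3'
        linarith
      · simp only
        rw [← hδ, ← hR] at hB4'
        have := mul_pos hn hδ0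
        linarith
    choose q hq1 hq2 hq3 using step
    obtain ⟨q0, hq0⟩ := Finite.exists_infinite_fiber q
    have hinf : (q ⁻¹' {q0}).Infinite := Set.infinite_coe_iff.mp hq0
    obtain ⟨n0, hn0⟩ := hinf.nonempty
    have hn0 : q n0 = q0 := hn0
    have hTight : Tight μ K1 K2 q0.1 := by
      refine ⟨⟨q0.2.1, ?_, ?_⟩, q0.2.2, ?_⟩
      · rw [← hn0]
        exact (hq1 n0).1
      · refine le_of_frequent _ _ (δ * ∑ w ∈ B, yv (dir (i, s) (j, t)) w) _ hinf (fun n hn => ?_)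
        have hn : q n = q0 := hn
        rw [← hn]
        exact (hq1 n).2
      · refine le_of_frequent _ _ (δ * yv (dir (i, s) (j, t)) v) _ hinf (fun n hn => ?_)
        have hn : q n = q0 := hn
        rw [← hn]
        exact hq2 n
    obtain ⟨w, hw⟩ := hq3 n0
    rw [hn0] at hw
    rcases w with w | w
    · have := col_le hd μ hμ q0.1 w
      linarith
    · have := hmax q0.1 w hTight
      linarith
  -- now analyse the tight arrangement
  obtain ⟨⟨B, hB, hB'⟩, v, hv⟩ := hT
  have hc3 := tail_eq hd μ (μ ⟨3, by omega⟩)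
    (fun k hk => hμ (by rw [Fin.le_def]; simp only; omega))
    (fun k hk => hμ (by rw [Fin.le_def]; simp only; omega))
  have hc4 := tail_eq hd μ (μ ⟨4, by omega⟩)
    (fun k hk => hμ (by rw [Fin.le_def]; simp only; omega))
    (fun k hk => hμ (by rw [Fin.le_def]; simp only; omega))
  rw [← hK2] at hc3 hc4
  have hnorow : ∀ r, Sum.inr r ∉ B := by
    intro r hr
    obtain ⟨A, hA1, -, hA2⟩ := cover (fun x => μ (σ x)) (fun x => hpos _) B r hr (by omega)
    have hl := low μ σ (μ ⟨3, by omega⟩) A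
    rw [hc3] at hl
    have hA3 : (2 * (d : ℝ) - 3) ≤ (A.card : ℝ) := by
      have : 2 * d ≤ A.card + 3 := by omega
      have : (2 * (d : ℝ)) ≤ (A.card : ℝ) + 3 := by exact_mod_cast this
      linarith
    nlinarith
  have hright : B.toRight = ∅ := by
    ext r
    simpa using hnorow r
  set L := B.toLeft with hL
  have hLc : L.card = d - 2 := by
    have := Finset.card_toLeft_add_card_toRight (u := B)
    rw [hright, Finset.card_empty, ← hL] at this
    omega
  rw [sum_yv, hright, Finset.empty_product, Finset.sum_empty, add_zero, ← hL] at hB'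
  have hAc : (((Finset.univ : Finset (Fin 2)) ×ˢ L).card : ℝ) = 2 * (d : ℝ) - 4 := by
    rw [Finset.card_product, hLc, Finset.card_univ, Fintype.card_fin]
    push_cast
    rw [Nat.cast_sub (by omega)]
    push_cast
    ring
  have ht3 := low_tight μ σ (μ ⟨3, by omega⟩) (Finset.univ ×ˢ L) (by rw [hc3, hAc]; linarith)
  have ht4 := low_tight μ σ (μ ⟨4, by omega⟩) (Finset.univ ×ˢ L) (by rw [hc4, hAc]; linarith)
  obtain ⟨t, ht⟩ : L.Nonempty := by
    rw [← Finset.card_pos]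
    omega
  have hLcompl : Lᶜ.card = 2 := by
    rw [Finset.card_compl, hLc, Fintype.card_fin]
    omega
  obtain ⟨a, b, hab, hLab⟩ := Finset.card_eq_two.mp hLcompl
  have ha : a ∉ L := by
    rw [← Finset.mem_compl, hLab]
    simp
  have hb : b ∉ L := by
    rw [← Finset.mem_compl, hLab]
    simp
  obtain ⟨j, hij⟩ : ∃ j : Fin 2, i ≠ j := by
    fin_cases i
    · exact ⟨1, by decide⟩
    · exact ⟨0, by decide⟩
  have hta : ∀ t' ∈ L, t' ≠ a := fun t' ht' h => ha (h ▸ ht')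
  have htb : ∀ t' ∈ L, t' ≠ b := fun t' ht' h => hb (h ▸ ht')
  have hja3 : μ ⟨3, by omega⟩ ≤ μ (σ (j, a)) := ht3.2 _ (by simp [ha])
  have hjb3 : μ ⟨3, by omega⟩ ≤ μ (σ (j, b)) := ht3.2 _ (by simp [hb])
  have h43 : μ ⟨4, by omega⟩ ≤ μ ⟨3, by omega⟩ := hμ (by simp [Fin.le_def])
  have hL4 : ∀ t' ∈ L, ∀ r, μ (σ (r, t')) ≤ μ ⟨4, by omega⟩ := fun t' ht' r => ht4.1 _ (by simp [ht'])
  -- `μ 2 ≤ μ 4`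
  have h24 : μ ⟨2, by omega⟩ ≤ μ ⟨4, by omega⟩ := by
    by_contra hlt
    push Not at hlt
    have hsub : (insert (j, a) (insert (j, b) ((Finset.univ : Finset (Fin 2)) ×ˢ L))).image σ ⊆
        Finset.Ici (⟨3, by omega⟩ : Fin (2 * d)) := by
      intro k hk
      rw [Finset.mem_image] at hk
      obtain ⟨x, hx, rfl⟩ := hk
      rw [Finset.mem_Ici]
      by_contra hlt2
      have hle : μ ⟨2, by omega⟩ ≤ μ (σ x) := hμ (by
        rw [Fin.le_def] at hlt2 ⊢
        simp only at hlt2 ⊢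
        omega)
      rw [Finset.mem_insert, Finset.mem_insert] at hx
      rcases hx with rfl | rfl | hx
      · have := key j t a hij (hta t ht)
        have := hL4 t ht i
        linarith
      · have := key j t b hij (htb t ht)
        have := hL4 t ht i
        linarith
      · have := ht4.1 x hx
        linarith
    have hcard := Finset.card_le_card hsub
    rw [Finset.card_image_of_injective _ σ.injective, Finset.card_insert_of_notMem,
      Finset.card_insert_of_notMem, Finset.card_product, hLc, Finset.card_univ, Fintype.card_fin,
      Fin.card_Ici] at hcard
    · simp only at hcard
      omega
    · simp [hb]
    · simp [ha, hab]
  have hL2 : ∀ t' ∈ L, μ ⟨2, by omega⟩ ≤ μ (σ (i, t')) := by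
    intro t' ht'
    have := key j t' a hij (hta t' ht')
    have h := h24.trans h43
    linarith
  have hno2 : ∀ r, ∀ t', t' ∉ L → μ ⟨2, by omega⟩ ≤ μ (σ (r, t')) := by
    intro r t' ht'
    have := ht3.2 (r, t') (by simp [ht'])
    linarith
  have hlast : ∀ k, μ ⟨2 * d - 1, by omega⟩ ≤ μ k := fun k => hμ (by
    rw [Fin.le_def]
    simp only
    omega)
  have hrow : ∀ r t1 t2, t1 ≠ t2 → μ ⟨2, by omega⟩ ≤ μ (σ (r, t1)) →
      μ ⟨2, by omega⟩ + μ ⟨2 * d - 1, by omega⟩ ≤ yv (fun x => μ (σ x)) (Sum.inr r) := by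
    intro r t1 t2 h12 hr
    simp only [yv, Sum.elim_inr]
    have := Finset.sum_le_sum_of_subset_of_nonneg (f := fun s => μ (σ (r, s)))
      (Finset.subset_univ {t1, t2}) (fun _ _ _ => hpos _)
    rw [Finset.sum_pair h12] at this
    have := hlast (σ (r, t2))
    linarith
  suffices hs : μ ⟨2, by omega⟩ + μ ⟨2 * d - 1, by omega⟩ ≤ yv (fun x => μ (σ x)) v by linarith
  rcases v with v | v
  · simp only [yv, Sum.elim_inl, Fin.sum_univ_two]
    have l0 := hlast (σ (0, v))
    have l1 := hlast (σ (1, v))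
    by_cases hvL : v ∈ L
    · have := hL2 v hvL
      fin_cases i
      · simp only [Fin.zero_eta] at this
        linarith
      · simp only [Fin.mk_one] at this
        linarith
    · have := hno2 0 v hvL
      linarith
  · exact hrow v a b hab (hno2 v a ha)

/-! ### The second condition -/

theorem part2 {d : ℕ} (hd : 3 ≤ d) (μ : Fin (2 * d) → ℝ) (hμ : Antitone μ) (hpos : ∀ k, 0 ≤ μ k)
    (m : ℝ) (hm : 0 < m) (hmid : ∀ k : Fin (2 * d), 2 ≤ (k : ℕ) → (k : ℕ) ≤ 2 * d - 2 → μ k = m)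
    (H : ∀ (σ : Fin 2 × Fin d ≃ Fin (2 * d)) (i j : Fin 2) (s t : Fin d), i ≠ j → s ≠ t →
      ∀ θ : ℝ, 0 ≤ θ → θ ≤ 1 → ∃ σ' : Fin 2 × Fin d ≃ Fin (2 * d),
      Majorizes (yv (rotE (fun x => μ (σ x)) (i, s) (j, t) θ)) (yv (fun x => μ (σ' x))))
    (hb : m < μ ⟨1, by omega⟩)
    (hb2 : μ ⟨1, by omega⟩ < 2 * ((d : ℝ) - 2) * m + μ ⟨2 * d - 1, by omega⟩)
    (hex : 0 < ((d : ℝ) - 3) * m + μ ⟨2 * d - 1, by omega⟩) : False := by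
  classical
  have hdR : (3 : ℝ) ≤ d := by exact_mod_cast hd
  set a := μ ⟨0, by omega⟩ with ha
  set b := μ ⟨1, by omega⟩ with hbdef
  set e := μ ⟨2 * d - 1, by omega⟩ with he
  have hab : b ≤ a := hμ (by simp [Fin.le_def])
  have hem : e ≤ m := by
    rw [← hmid ⟨2, by omega⟩ (by simp) (by simp; omega)]
    exact hμ (by rw [Fin.le_def]; simp only; omega)
  have he0 : 0 ≤ e := hpos _
  obtain ⟨u, hu1, hu2⟩ : ∃ u, max 0 (b - ((d : ℝ) - 1) * m) < u ∧
      u < min (b - m) (((d : ℝ) - 3) * m + e) := by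
    apply _root_.exists_between
    rw [max_lt_iff, lt_min_iff, lt_min_iff]
    refine ⟨⟨by linarith, hex⟩, ⟨?_, ?_⟩⟩
    · nlinarith
    · nlinarith
  rw [max_lt_iff] at hu1
  rw [lt_min_iff] at hu2
  obtain ⟨hu0, hub⟩ := hu1
  obtain ⟨hubm, hue⟩ := hu2
  set s0 : Fin d := ⟨0, by omega⟩ with hs0
  set s1 : Fin d := ⟨1, by omega⟩ with hs1
  have h10 : s1 ≠ s0 := by simp [hs0, hs1]
  have hpq : ((0, s1) : Fin 2 × Fin d) ≠ (1, s0) := by simp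
  set σ := pairing d with hσ
  have v00 : μ (σ (0, s0)) = a := by
    have : σ (0, s0) = ⟨0, by omega⟩ := Fin.ext (by rw [pairing_val]; simp [hs0])
    rw [this]
  have v10 : μ (σ (1, s0)) = b := by
    have : σ (1, s0) = ⟨1, by omega⟩ := Fin.ext (by rw [pairing_val]; simp [hs0])
    rw [this]
  have v0 : ∀ s, s ≠ s0 → μ (σ (0, s)) = m := by
    intro s hs
    have hs' : (s : ℕ) ≠ 0 := fun h => hs (Fin.ext h)
    apply hmid
    · rw [pairing_val]; simp; omega
    · rw [pairing_val]; simp; omega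
  have hbm : 0 < b - m := by linarith
  obtain ⟨σ', hσ'⟩ := H σ 0 1 s1 s0 (by decide) h10 (u / (b - m)) (by positivity)
    (by rw [div_le_one hbm]; linarith)
  have hfac : u / (b - m) * (μ (σ (1, s0)) - μ (σ (0, s1))) = u := by
    rw [v10, v0 s1 h10]
    field_simp
  obtain ⟨B1, hB1, hB1'⟩ := maj_up hσ' {Sum.inr 0}
  obtain ⟨B, hB, hB'⟩ := maj_down hσ' ((Finset.univ.erase s0).disjSum ∅)
  rw [Finset.card_singleton, Finset.card_eq_one] at hB1
  obtain ⟨v, rfl⟩ := hB1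
  simp only [Finset.sum_singleton, yv_rot _ _ _ hpq, hfac] at hB1'
  rw [yv_dir_row _ _ _ _ (by decide)] at hB1'
  simp only [yv_rot _ _ _ hpq, hfac] at hB'
  rw [Finset.sum_add_distrib, ← Finset.mul_sum, Finset.card_disjSum] at *
  rw [Finset.card_erase_of_mem (Finset.mem_univ _), Finset.card_univ, Fintype.card_fin,
    Finset.card_empty, add_zero] at hB
  have hdirsum : ∑ w ∈ (Finset.univ.erase s0).disjSum (∅ : Finset (Fin 2)),
      yv (dir ((0, s1) : Fin 2 × Fin d) (1, s0)) w = 1 := by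
    rw [Finset.sum_disjSum, Finset.sum_empty, add_zero]
    simp only [yv_dir_col]
    rw [Finset.sum_eq_single s1]
    · simp [h10]
    · intro r hr hr1
      simp [hr1, Finset.ne_of_mem_erase hr]
    · intro h
      simp [h10] at h
  have hposum : ∀ f : Fin (2 * d) → ℝ, (∀ k : Fin (2 * d), 2 ≤ (k : ℕ) → (k : ℕ) ≤ 2 * d - 2 → f k = 0) →
      ∑ k, f k = f ⟨0, by omega⟩ + f ⟨1, by omega⟩ + f ⟨2 * d - 1, by omega⟩ := by
    intro f hf
    rw [← Finset.sum_subset (Finset.subset_univ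
      {(⟨0, by omega⟩ : Fin (2 * d)), ⟨1, by omega⟩, ⟨2 * d - 1, by omega⟩})]
    · rw [Finset.sum_insert, Finset.sum_pair]
      · ring
      · simp [Fin.ext_iff]; omega
      · simp [Fin.ext_iff]; omega
    · intro k _ hk
      simp [Fin.ext_iff] at hk
      exact hf k (by omega) (by omega)
  have hmin : ∑ k, min (μ k - m) 0 = e - m := by
    rw [hposum]
    · rw [min_eq_right (by linarith), min_eq_right (by linarith), min_eq_left (by linarith)]
      ring
    · intro k h1 h2
      simp [hmid k h1 h2]
  have hmaxs : ∑ k, max (μ k - m) 0 = (a - m) + (b - m) := by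
    rw [hposum]
    · rw [max_eq_left (by linarith), max_eq_left (by linarith), max_eq_right (by linarith)]
      ring
    · intro k h1 h2
      simp [hmid k h1 h2]
  have htot : ∑ k, μ k = a + b + (2 * (d : ℝ) - 3) * m + e := by
    have := hposum (fun k => μ k - m) (fun k h1 h2 => by simp [hmid k h1 h2])
    rw [Finset.sum_sub_distrib] at this
    simp only [Finset.sum_const, Finset.card_univ, Fintype.card_fin, nsmul_eq_mul] at this
    push_cast at this
    linarith
  have hlow : ∀ A : Finset (Fin 2 × Fin d), (A.card : ℝ) * m + (e - m) ≤ ∑ x ∈ A, μ (σ' x) := by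
    intro A
    have := low μ σ' m A
    rwa [hmin] at this
  have hlow' : ∀ (A : Finset (Fin 2 × Fin d)) (x : Fin 2 × Fin d), x ∈ A → (σ' x : ℕ) ≤ 1 →
      (A.card : ℝ) * m + (e - m) + (b - m) ≤ ∑ x ∈ A, μ (σ' x) := by
    intro A x hx hx1
    have h1 := hlow (A.erase x)
    have h2 := Finset.add_sum_erase A (fun x => μ (σ' x)) hx
    have h3 := Finset.card_erase_add_one hx
    have h4 : ((A.erase x).card : ℝ) + 1 = A.card := by exact_mod_cast h3
    have h5 : b ≤ μ (σ' x) := hμ (by rw [Fin.le_def]; simpa using hx1)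
    rw [← h4]
    linarith
  -- values of the test vector
  have hrow0 : yv (fun x => μ (σ x)) (Sum.inr 0) = a + ((d : ℝ) - 1) * m := by
    simp only [yv, Sum.elim_inr]
    rw [← Finset.add_sum_erase _ _ (Finset.mem_univ s0), v00,
      Finset.sum_congr rfl (fun s hs => v0 s (Finset.ne_of_mem_erase hs))]
    simp only [Finset.sum_const, nsmul_eq_mul]
    rw [Finset.card_erase_of_mem (Finset.mem_univ _), Finset.card_univ, Fintype.card_fin,
      Nat.cast_sub (by omega)]
    simp
  have hcols : ∑ w ∈ (Finset.univ.erase s0).disjSum (∅ : Finset (Fin 2)), yv (fun x => μ (σ x)) w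
      = (2 * (d : ℝ) - 3) * m + e := by
    rw [Finset.sum_disjSum, Finset.sum_empty, add_zero]
    have h1 := Finset.add_sum_erase Finset.univ
      (fun s => yv (fun x => μ (σ x)) (Sum.inl s)) (Finset.mem_univ s0)
    have h2 : ∑ s, yv (fun x => μ (σ x)) (Sum.inl s) = ∑ k, μ k := by
      simp only [yv, Sum.elim_inl]
      rw [← Equiv.sum_comp σ μ, Fintype.sum_prod_type_right]
    have h3 : yv (fun x => μ (σ x)) (Sum.inl s0) = a + b := by
      simp only [yv, Sum.elim_inl, Fin.sum_univ_two, v00, v10]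
    rw [h2, h3, htot] at h1
    linarith
  rw [hdirsum, hcols, mul_one] at hB'
  rw [hrow0, mul_one] at hB1'
  -- the row with both large entries
  rcases v with v | i
  · have := col_le hd μ hμ σ' v
    rw [← ha, ← hbdef] at this
    linarith
  have hin : ∀ z : Fin (2 * d), (z : ℕ) ≤ 1 → ∃ s, σ' (i, s) = z := by
    intro z hz
    by_contra hno
    push Not at hno
    have hz' : ∀ s, (i, s) ≠ σ'.symm z := fun s h => hno s (by rw [h]; simp)
    have hbz : b ≤ μ z := hμ (by rw [Fin.le_def]; simpa using hz)
    have h1 : ∑ x ∈ ({i} ×ˢ Finset.univ : Finset (Fin 2 × Fin d)), max (μ (σ' x) - m) 0 ≤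
        ∑ x ∈ Finset.univ.erase (σ'.symm z), max (μ (σ' x) - m) 0 := by
      apply Finset.sum_le_sum_of_subset_of_nonneg
      · rintro ⟨i', s⟩ hx
        simp only [Finset.mem_product, Finset.mem_singleton, Finset.mem_univ, and_true] at hx
        subst hx
        simpa using hz' s
      · intro x _ _
        exact le_max_right _ _
    have h2 := Finset.add_sum_erase Finset.univ (fun x => max (μ (σ' x) - m) 0)
      (Finset.mem_univ (σ'.symm z))
    rw [Equiv.sum_comp σ' (fun k => max (μ k - m) 0), hmaxs] at h2
    simp only [Equiv.apply_symm_apply] at h2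
    have h3 : μ z - m ≤ max (μ z - m) 0 := le_max_left _ _
    have h4 : ∑ x ∈ ({i} ×ˢ Finset.univ : Finset (Fin 2 × Fin d)), (μ (σ' x) - m) ≤
        ∑ x ∈ ({i} ×ˢ Finset.univ : Finset (Fin 2 × Fin d)), max (μ (σ' x) - m) 0 :=
      Finset.sum_le_sum (fun x _ => le_max_left _ _)
    rw [Finset.sum_product, Finset.sum_singleton, Finset.sum_sub_distrib] at h4
    simp only [Finset.sum_const, Finset.card_univ, Fintype.card_fin, nsmul_eq_mul] at h4
    simp only [yv, Sum.elim_inr] at hB1'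
    linarith
  obtain ⟨t0, ht0⟩ := hin ⟨0, by omega⟩ (by simp)
  obtain ⟨t1, ht1⟩ := hin ⟨1, by omega⟩ (by simp)
  have ht01 : t0 ≠ t1 := by
    intro h
    rw [h, ht1] at ht0
    simp [Fin.ext_iff] at ht0
  by_cases hiB : Sum.inr i ∈ B
  · obtain ⟨A, hA1, hA2, hA3⟩ := cover (fun x => μ (σ' x)) (fun x => hpos _) B i hiB (by omega)
    have h1 := hlow' A (i, t0) (hA2 t0) (by rw [ht0]; simp)
    have h2 : (2 * (d : ℝ) - 2) ≤ (A.card : ℝ) := by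
      have : 2 * d ≤ A.card + 2 := by omega
      have : (2 * (d : ℝ)) ≤ (A.card : ℝ) + 2 := by exact_mod_cast this
      linarith
    nlinarith
  have hiR : i ∉ B.toRight := by simpa using hiB
  have hcard := Finset.card_toLeft_add_card_toRight (u := B)
  rw [sum_yv] at hB'
  by_cases hR : B.toRight = ∅
  · rw [hR, Finset.card_empty] at hcard
    rw [hR, Finset.empty_product, Finset.sum_empty, add_zero] at hB'
    have hc : (((Finset.univ : Finset (Fin 2)) ×ˢ B.toLeft).card : ℝ) = 2 * (d : ℝ) - 2 := by
      have : ((Finset.univ : Finset (Fin 2)) ×ˢ B.toLeft).card + 2 = 2 * d := by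
        rw [Finset.card_product, Finset.card_univ, Fintype.card_fin]
        omega
      have : (((Finset.univ : Finset (Fin 2)) ×ˢ B.toLeft).card : ℝ) + 2 = 2 * d := by
        exact_mod_cast this
      linarith
    have hor : t0 ∈ B.toLeft ∨ t1 ∈ B.toLeft := by
      by_contra hno
      push Not at hno
      have h1 : {t0, t1} ⊆ B.toLeftᶜ := by
        intro x hx
        simp only [Finset.mem_insert, Finset.mem_singleton] at hx
        rw [Finset.mem_compl]
        rcases hx with rfl | rfl
        · exact hno.1
        · exact hno.2
      have h2 := Finset.card_le_card h1
      rw [Finset.card_pair ht01, Finset.card_compl, Fintype.card_fin] at h2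
      omega
    have hfin : (((Finset.univ : Finset (Fin 2)) ×ˢ B.toLeft).card : ℝ) * m + (e - m) + (b - m) ≤
        ∑ x ∈ Finset.univ ×ˢ B.toLeft, μ (σ' x) := by
      rcases hor with h | h
      · exact hlow' _ (i, t0) (by simp only [Finset.mem_product, Finset.mem_univ, true_and]; exact h)
          (by rw [ht0]; simp)
      · exact hlow' _ (i, t1) (by simp only [Finset.mem_product, Finset.mem_univ, true_and]; exact h)
          (by rw [ht1])
    rw [hc] at hfin
    linarith
  · obtain ⟨j, hj⟩ := Finset.nonempty_iff_ne_empty.mpr hR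
    have hRj : B.toRight = {j} := by
      rcases fin2_finset _ _ hj with h | h
      · exact h
      · rw [h] at hiR
        exact absurd (Finset.mem_univ i) hiR
    rw [hRj, Finset.card_singleton] at hcard
    rw [hRj] at hB'
    have h1 := hlow (Finset.univ ×ˢ B.toLeft)
    have h2 := hlow ({j} ×ˢ Finset.univ)
    have hc1 : (((Finset.univ : Finset (Fin 2)) ×ˢ B.toLeft).card : ℝ) = 2 * (d : ℝ) - 4 := by
      have : ((Finset.univ : Finset (Fin 2)) ×ˢ B.toLeft).card + 4 = 2 * d := by
        rw [Finset.card_product, Finset.card_univ, Fintype.card_fin]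
        omega
      have : (((Finset.univ : Finset (Fin 2)) ×ˢ B.toLeft).card : ℝ) + 4 = 2 * d := by
        exact_mod_cast this
      linarith
    have hc2 : ((({j} : Finset (Fin 2)) ×ˢ (Finset.univ : Finset (Fin d))).card : ℝ) = d := by
      rw [Finset.card_product]
      simp
    rw [hc1] at h1
    rw [hc2] at h2
    linarith

theorem fourth_pos (d : ℕ) (hd : 3 ≤ d)
    (C : Matrix (Fin 2 × Fin d) (Fin 2 × Fin d) ℂ) (hC : C.PosSemidef)
    (μ : Fin (2 * d) → ℝ) (hμ : Antitone μ)
    (g : Fin (2 * d) ≃ Fin 2 × Fin d) (hg : ∀ k, μ k = hC.1.eigenvalues (g k))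
    (hrank : 3 < C.rank) (hpos : ∀ k, 0 ≤ μ k) : 0 < μ ⟨3, by omega⟩ := by
  classical
  by_contra hle
  push Not at hle
  rw [hC.1.rank_eq_card_non_zero_eigs, Fintype.card_subtype] at hrank
  have hsub : (Finset.univ.filter (fun x => hC.1.eigenvalues x ≠ 0)) ⊆
      (Finset.Iio (⟨3, by omega⟩ : Fin (2 * d))).image g := by
    intro x hx
    rw [Finset.mem_filter] at hx
    rw [Finset.mem_image]
    refine ⟨g.symm x, ?_, by simp⟩
    rw [Finset.mem_Iio]
    by_contra hlt
    push Not at hlt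
    have h1 := hμ hlt
    have h2 := hpos (g.symm x)
    have h3 := hg (g.symm x)
    rw [Equiv.apply_symm_apply] at h3
    exact hx.2 (by linarith)
  have h1 := Finset.card_le_card hsub
  rw [Finset.card_image_of_injective _ g.injective, Fin.card_Iio] at h1
  simp only at h1
  omega

end QubitQudit

theorem necessary_conditions_qubit_qudit (d : ℕ) (hd : 3 ≤ d)
    (C : Matrix (Fin 2 × Fin d) (Fin 2 × Fin d) ℂ) (hC : C.PosSemidef)
    -- `μ` lists the eigenvalues of `C` in decreasing order
    (μ : Fin (2 * d) → ℝ) (hμ : Antitone μ)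
    (g : Fin (2 * d) ≃ Fin 2 × Fin d) (hg : ∀ k, μ k = hC.1.eigenvalues (g k))
    -- majorization by a diagonal matrix holds over the whole unitary orbit
    (hmaj : ∀ U : Matrix (Fin 2 × Fin d) (Fin 2 × Fin d) ℂ,
      U ∈ Matrix.unitaryGroup (Fin 2 × Fin d) ℂ →
      ∃ D : Matrix (Fin 2 × Fin d) (Fin 2 × Fin d) ℂ, D.IsDiag ∧
        (∃ gp : Equiv.Perm (Fin 2 × Fin d), ∀ p, D p p = (hC.1.eigenvalues (gp p) : ℂ)) ∧
        ∀ (hU1 : (ptrace1 (U * C * Uᴴ)).IsHermitian)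
          (hU2 : (ptrace2 (U * C * Uᴴ)).IsHermitian)
          (hD1 : (ptrace1 D).IsHermitian) (hD2 : (ptrace2 D).IsHermitian),
          Majorizes (Sum.elim hU1.eigenvalues hU2.eigenvalues)
            (Sum.elim hD1.eigenvalues hD2.eigenvalues))
    (hrank : 3 < C.rank) :
    (∀ i j : Fin (2 * d), 2 ≤ (i : ℕ) → (i : ℕ) ≤ 2 * d - 2 →
      2 ≤ (j : ℕ) → (j : ℕ) ≤ 2 * d - 2 → μ i = μ j) ∧
    (μ ⟨1, by omega⟩ = μ ⟨2, by omega⟩ ∨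
      2 * ((d : ℝ) - 2) * μ ⟨2, by omega⟩ + μ ⟨2 * d - 1, by omega⟩ ≤ μ ⟨1, by omega⟩ ∨
      (d = 3 ∧ μ ⟨2 * d - 1, by omega⟩ = 0)) := by
  have hpos : ∀ k, 0 ≤ μ k := fun k => by
    rw [hg]
    exact hC.eigenvalues_nonneg _
  have h3 := QubitQudit.fourth_pos d hd C hC μ hμ g hg hrank hpos
  have H := QubitQudit.reduction d C hC μ g hg hmaj
  have h1 := QubitQudit.part1 hd μ hμ hpos h3 H
  have hmid : ∀ k : Fin (2 * d), 2 ≤ (k : ℕ) → (k : ℕ) ≤ 2 * d - 2 → μ k = μ ⟨2, by omega⟩ := by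
    intro k hk1 hk2
    apply le_antisymm
    · exact hμ (by rw [Fin.le_def]; exact hk1)
    · exact h1.trans (hμ (by rw [Fin.le_def]; exact hk2))
  refine ⟨fun i j hi1 hi2 hj1 hj2 => by rw [hmid i hi1 hi2, hmid j hj1 hj2], ?_⟩
  have hm : 0 < μ ⟨2, by omega⟩ := h3.trans_le (hμ (by simp [Fin.le_def]))
  by_contra hno
  rw [not_or, not_or] at hno
  obtain ⟨n1, n2, n3⟩ := hno
  have h12 : μ ⟨2, by omega⟩ ≤ μ ⟨1, by omega⟩ := hμ (by simp [Fin.le_def])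
  refine QubitQudit.part2 hd μ hμ hpos _ hm hmid H (lt_of_le_of_ne h12 (Ne.symm n1))
    (not_le.mp n2) ?_
  have he0 := hpos ⟨2 * d - 1, by omega⟩
  rcases Nat.lt_or_ge 3 d with hd4 | hd3
  · have : (4 : ℝ) ≤ d := by exact_mod_cast hd4
    nlinarith
  · have hd' : d = 3 := le_antisymm hd3 hd
    have hne : μ ⟨2 * d - 1, by omega⟩ ≠ 0 := fun h => n3 ⟨hd', h⟩
    have : (d : ℝ) = 3 := by exact_mod_cast hd'
    have hpe := lt_of_le_of_ne he0 (Ne.symm hne)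
    rw [this]
    linarith
end

section
/- Let d > 2 and let C be a positive semidefinite matrix on ℂ²⊗ℂ^d with eigenvalues λ1 ≥ … ≥ λ_{2d}. Then the following are equivalent: (A) for every unitary U on ℂ²⊗ℂ^d there exists a diagonal matrix D whose diagonal entries are a permutation of the eigenvalues of C (with multiplicity) such that λ(tr_1[UCU*]) ⊕ λ(tr_2[UCU*]) ≺ λ(tr_1[D]) ⊕ λ(tr_2[D]); (B) at least one of the following holds: (1) rank(C) ≤ 3; (2) rank(C) ∈ {2d−1, 2d} and λ2 = λ3 = … = λ_{2d−1}; (3) rank(C) ∈ {2d−1, 2d}, λ3 = … = λ_{2d−1}, and λ2 ≥ 2(d−2)λ3 + λ_{2d}; (4) d = 3, rank(C) = 5, and λ3 = λ4 = λ5. Moreover, in cases (1), (2) and (4) the matrix D can be taken to be Λ, the diagonal matrix whose diagonal lists the eigenvalues in decreasing order, and in case (3) D can be taken to be either Λ or the matrix obtained from Λ by swapping the diagonal entries at positions 2 and d+1. -/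
open Matrix Finset Kronecker
open scoped ComplexOrder

namespace QQ

theorem maxSum_bdd {ι : Type*} [Fintype ι] (x : ι → ℝ) (k : ℕ) :
    BddAbove {s : ℝ | ∃ A : Finset ι, A.card = k ∧ s = ∑ i ∈ A, x i} := by
  have : {s : ℝ | ∃ A : Finset ι, A.card = k ∧ s = ∑ i ∈ A, x i} ⊆
      Set.range (fun A : Finset ι => ∑ i ∈ A, x i) := by
    rintro s ⟨A, _, rfl⟩
    exact ⟨A, rfl⟩
  exact ((Set.finite_range _).subset this).bddAbove

theorem le_maxSum {ι : Type*} [Fintype ι] (x : ι → ℝ) (A : Finset ι) (k : ℕ) (h : A.card = k) :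
    ∑ i ∈ A, x i ≤ maxSum x k :=
  le_csSup (maxSum_bdd x k) ⟨A, h, rfl⟩

theorem maxSum_le {ι : Type*} [Fintype ι] (x : ι → ℝ) (k : ℕ) (hk : k ≤ Fintype.card ι) (B : ℝ)
    (h : ∀ A : Finset ι, A.card = k → ∑ i ∈ A, x i ≤ B) : maxSum x k ≤ B := by
  obtain ⟨A, -, hA⟩ := Finset.exists_subset_card_eq (s := (Finset.univ : Finset ι)) (n := k)
    (by simpa using hk)
  refine csSup_le ⟨_, A, hA, rfl⟩ ?_
  rintro s ⟨A, hA, rfl⟩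
  exact h A hA

theorem maxSum_big {ι : Type*} [Fintype ι] (x : ι → ℝ) (k : ℕ) (hk : Fintype.card ι < k) :
    maxSum x k = 0 := by
  unfold maxSum
  have : {s : ℝ | ∃ A : Finset ι, A.card = k ∧ s = ∑ i ∈ A, x i} = ∅ := by
    ext s
    simp only [Set.mem_ofPred_eq, Set.mem_empty_iff_false, iff_false]
    rintro ⟨A, hA, -⟩
    have := Finset.card_le_univ A
    omega
  rw [this, Real.sSup_empty]

theorem maxSum_zero {ι : Type*} [Fintype ι] (x : ι → ℝ) : maxSum x 0 = 0 := by
  apply le_antisymm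
  · apply maxSum_le _ _ (Nat.zero_le _)
    intro A hA
    rw [Finset.card_eq_zero] at hA
    simp [hA]
  · simpa using le_maxSum x ∅ 0 rfl

theorem maxSum_equiv_le {ι κ : Type*} [Fintype ι] [Fintype κ] (e : ι ≃ κ) (x : κ → ℝ) (k : ℕ) :
    maxSum (x ∘ e) k ≤ maxSum x k := by
  by_cases hk : k ≤ Fintype.card ι
  · apply maxSum_le _ _ hk
    intro A hA
    have := le_maxSum x (A.map e.toEmbedding) k (by simpa using hA)
    simpa using this
  · push Not at hk
    rw [maxSum_big _ _ hk, maxSum_big _ _ (by rwa [← Fintype.card_congr e])]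

theorem maxSum_equiv {ι κ : Type*} [Fintype ι] [Fintype κ] (e : ι ≃ κ) (x : κ → ℝ) (k : ℕ) :
    maxSum (x ∘ e) k = maxSum x k := by
  apply le_antisymm (maxSum_equiv_le e x k)
  have := maxSum_equiv_le e.symm (x ∘ e) k
  simpa [Function.comp_assoc] using this

/-- column sums -/
def colS {d : ℕ} (δ : Fin 2 × Fin d → ℝ) (s : Fin d) : ℝ := ∑ i, δ (i, s)
/-- row sums -/
def rowS {d : ℕ} (δ : Fin 2 × Fin d → ℝ) (i : Fin 2) : ℝ := ∑ s, δ (i, s)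
/-- joint vector -/
def vec {d : ℕ} (δ : Fin 2 × Fin d → ℝ) : Fin d ⊕ Fin 2 → ℝ := Sum.elim (colS δ) (rowS δ)

/-- partial sums -/
def P (L : ℕ → ℝ) (n : ℕ) : ℝ := ∑ i ∈ range n, L i

/-- `δ` is majorized by `L` -/
def Good {d : ℕ} (L : ℕ → ℝ) (δ : Fin 2 × Fin d → ℝ) : Prop :=
  (∀ A : Finset (Fin 2 × Fin d), ∑ p ∈ A, δ p ≤ P L A.card) ∧ ∑ p, δ p = P L (2 * d)

theorem P_succ (L : ℕ → ℝ) (n : ℕ) : P L (n + 1) = P L n + L n := by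
  simp [P, Finset.sum_range_succ]

theorem P_zero (L : ℕ → ℝ) : P L 0 = 0 := by simp [P]

theorem P_mono {L : ℕ → ℝ} (h0 : ∀ i, 0 ≤ L i) : Monotone (P L) := by
  apply monotone_nat_of_le_succ
  intro n
  rw [P_succ]
  linarith [h0 n]

theorem sum_cols {d : ℕ} (δ : Fin 2 × Fin d → ℝ) (S : Finset (Fin d)) :
    ∑ s ∈ S, colS δ s = ∑ p ∈ (univ : Finset (Fin 2)) ×ˢ S, δ p := by
  rw [Finset.sum_product_right]; rfl

theorem row_eq {d : ℕ} (δ : Fin 2 × Fin d → ℝ) (i : Fin 2) :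
    rowS δ i = ∑ p ∈ ({i} : Finset (Fin 2)) ×ˢ (univ : Finset (Fin d)), δ p := by
  rw [Finset.sum_product]; simp [rowS]

theorem sum_rows {d : ℕ} (δ : Fin 2 × Fin d → ℝ) : rowS δ 0 + rowS δ 1 = ∑ p, δ p := by
  rw [Fintype.sum_prod_type]; simp [rowS]

theorem sum_allcols {d : ℕ} (δ : Fin 2 × Fin d → ℝ) : ∑ s, colS δ s = ∑ p, δ p := by
  rw [Fintype.sum_prod_type_right]; simp [colS]

theorem good_nonneg {d : ℕ} {L : ℕ → ℝ} {δ : Fin 2 × Fin d → ℝ} (h0 : ∀ i, 0 ≤ L i) (h : Good L δ)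
    (p : Fin 2 × Fin d) : 0 ≤ δ p := by
  have h1 := h.1 (univ.erase p)
  have h2 := Finset.add_sum_erase univ δ (Finset.mem_univ p)
  have h3 := h.2
  have h4 : (univ.erase p).card ≤ 2 * d := by
    have := Finset.card_le_univ (univ.erase p)
    simpa using this
  have h5 := P_mono h0 h4
  linarith

theorem colS_nonneg {d : ℕ} {L : ℕ → ℝ} {δ : Fin 2 × Fin d → ℝ} (h0 : ∀ i, 0 ≤ L i) (h : Good L δ)
    (s : Fin d) : 0 ≤ colS δ s := Finset.sum_nonneg fun _ _ => good_nonneg h0 h _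

theorem cols_le {d : ℕ} {L : ℕ → ℝ} {δ : Fin 2 × Fin d → ℝ} (h : Good L δ) (S : Finset (Fin d)) :
    ∑ s ∈ S, colS δ s ≤ P L (2 * S.card) := by
  rw [sum_cols]
  have := h.1 ((univ : Finset (Fin 2)) ×ˢ S)
  rwa [Finset.card_product, Finset.card_univ, Fintype.card_fin] at this

theorem col_le {d : ℕ} {L : ℕ → ℝ} {δ : Fin 2 × Fin d → ℝ} (h : Good L δ) (s : Fin d) :
    colS δ s ≤ P L 2 := by
  simpa using cols_le h {s}

theorem row_cols {d : ℕ} (δ : Fin 2 × Fin d → ℝ) (i : Fin 2) (S : Finset (Fin d)) :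
    ∃ A : Finset (Fin 2 × Fin d), A.card = d + S.card ∧
      rowS δ i + ∑ s ∈ S, colS δ s = ∑ p ∈ A, δ p + ∑ s ∈ S, δ (i, s) := by
  refine ⟨(({i} : Finset (Fin 2)) ×ˢ (univ : Finset (Fin d))) ∪ ((univ : Finset (Fin 2)) ×ˢ S), ?_, ?_⟩
  · have h1 := Finset.card_union_add_card_inter
      (({i} : Finset (Fin 2)) ×ˢ (univ : Finset (Fin d))) ((univ : Finset (Fin 2)) ×ˢ S)
    rw [Finset.product_inter_product, Finset.inter_univ, Finset.univ_inter] at h1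
    simp only [Finset.card_product, Finset.card_univ, Fintype.card_fin, Finset.card_singleton] at h1
    omega
  · rw [row_eq, sum_cols, ← Finset.sum_union_inter, Finset.product_inter_product,
      Finset.inter_univ, Finset.univ_inter]
    congr 1
    rw [Finset.sum_product]; simp

theorem part_row_le {d : ℕ} {L : ℕ → ℝ} {δ : Fin 2 × Fin d → ℝ} (h : Good L δ) (i : Fin 2)
    (S : Finset (Fin d)) : ∑ s ∈ S, δ (i, s) ≤ P L S.card := by
  have := h.1 (({i} : Finset (Fin 2)) ×ˢ S)
  rw [Finset.sum_product, Finset.card_product] at this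
  simpa using this

theorem row_cols_le {d : ℕ} {L : ℕ → ℝ} {δ : Fin 2 × Fin d → ℝ} (h : Good L δ) (i : Fin 2)
    (S : Finset (Fin d)) :
    rowS δ i + ∑ s ∈ S, colS δ s ≤ P L S.card + P L (d + S.card) := by
  obtain ⟨A, hA, hs⟩ := row_cols δ i S
  rw [hs, ← hA]
  have := h.1 A
  have := part_row_le h i S
  linarith

theorem row_le_of_cols {d : ℕ} {L : ℕ → ℝ} {δ : Fin 2 × Fin d → ℝ} (h : Good L δ) (i : Fin 2)
    (S : Finset (Fin d)) (hS : P L (2 * S.card) ≤ ∑ s ∈ S, colS δ s) :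
    rowS δ i ≤ P L S.card + P L (d + S.card) - P L (2 * S.card) := by
  linarith [row_cols_le h i S]

theorem sum_vec {d : ℕ} (δ : Fin 2 × Fin d → ℝ) (A : Finset (Fin d ⊕ Fin 2)) :
    ∑ a ∈ A, vec δ a = ∑ s ∈ A.toLeft, colS δ s + ∑ i ∈ A.toRight, rowS δ i := by
  conv_lhs => rw [← Finset.toLeft_disjSum_toRight (u := A)]
  rw [Finset.sum_disjSum]
  rfl

theorem vec_cases {d : ℕ} (δ : Fin 2 × Fin d → ℝ) (A : Finset (Fin d ⊕ Fin 2)) :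
    ∃ S : Finset (Fin d), (S.card = A.card ∧ ∑ a ∈ A, vec δ a = ∑ s ∈ S, colS δ s) ∨
      (∃ i, S.card + 1 = A.card ∧ ∑ a ∈ A, vec δ a = rowS δ i + ∑ s ∈ S, colS δ s) ∨
      (S.card + 2 = A.card ∧ ∑ a ∈ A, vec δ a = ∑ p, δ p + ∑ s ∈ S, colS δ s) := by
  refine ⟨A.toLeft, ?_⟩
  have hc := Finset.card_toLeft_add_card_toRight (u := A)
  rw [sum_vec]
  have h2 : A.toRight.card ≤ 2 := by simpa using Finset.card_le_univ A.toRight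
  have : A.toRight.card = 0 ∨ A.toRight.card = 1 ∨ A.toRight.card = 2 := by omega
  rcases this with h | h | h
  · left
    rw [Finset.card_eq_zero] at h
    rw [h] at hc ⊢
    simp at hc ⊢
    exact hc
  · right; left
    obtain ⟨i, hi⟩ := Finset.card_eq_one.1 h
    refine ⟨i, by omega, ?_⟩
    rw [hi]; simp [add_comm]
  · right; right
    refine ⟨by omega, ?_⟩
    have : A.toRight = univ := by
      rw [← Finset.card_eq_iff_eq_univ]; simpa using h
    rw [this, ← sum_rows]; simp [add_comm]

theorem vec_le {d : ℕ} {L : ℕ → ℝ} (h0 : ∀ i, 0 ≤ L i) {δ : Fin 2 × Fin d → ℝ} (h : Good L δ)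
    (B : ℝ) (k : ℕ) (hk1 : 1 ≤ k) (hk : k ≤ d + 2)
    (H0 : k = 1 → ∀ s, colS δ s ≤ B) (HT : 2 ≤ k → P L (2 * d) ≤ B)
    (H1 : ∀ i S, Finset.card S + 1 = k → rowS δ i + ∑ s ∈ S, colS δ s ≤ B)
    (H2 : ∀ S, Finset.card S + 2 = k → P L (2 * d) + ∑ s ∈ S, colS δ s ≤ B) :
    maxSum (vec δ) k ≤ B := by
  apply maxSum_le
  · simpa using hk
  intro A hA
  obtain ⟨S, ⟨h1, h2⟩ | ⟨i, h1, h2⟩ | ⟨h1, h2⟩⟩ := vec_cases δ A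
  · rw [h2]
    rw [hA] at h1
    by_cases hk2 : 2 ≤ k
    · refine le_trans ?_ (HT hk2)
      rw [← h.2, ← sum_allcols]
      exact Finset.sum_le_sum_of_subset_of_nonneg (Finset.subset_univ _)
        fun s _ _ => colS_nonneg h0 h s
    · have hk3 : k = 1 := by omega
      rw [hk3] at h1
      obtain ⟨s, rfl⟩ := Finset.card_eq_one.1 h1
      simpa using H0 hk3 s
  · rw [h2]
    exact H1 i S (by omega)
  · rw [h2, h.2]
    exact H2 S (by omega)

theorem le_vec1 {d : ℕ} (δ : Fin 2 × Fin d → ℝ) (i : Fin 2) (S : Finset (Fin d)) (k : ℕ)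
    (hk : S.card + 1 = k) : rowS δ i + ∑ s ∈ S, colS δ s ≤ maxSum (vec δ) k := by
  have := le_maxSum (vec δ) (S.disjSum {i}) k (by simpa using hk)
  rw [Finset.sum_disjSum] at this
  simpa [vec, add_comm] using this

theorem le_vec2 {d : ℕ} (δ : Fin 2 × Fin d → ℝ) (S : Finset (Fin d)) (k : ℕ)
    (hk : S.card + 2 = k) : ∑ p, δ p + ∑ s ∈ S, colS δ s ≤ maxSum (vec δ) k := by
  have := le_maxSum (vec δ) (S.disjSum univ) k (by simpa using hk)
  rw [Finset.sum_disjSum] at this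
  rw [← sum_rows]
  simpa [vec, add_comm] using this

theorem le_vec0 {d : ℕ} (δ : Fin 2 × Fin d → ℝ) (s : Fin d) : colS δ s ≤ maxSum (vec δ) 1 := by
  have := le_maxSum (vec δ) {Sum.inl s} 1 (by simp)
  simpa [vec] using this

theorem sum_vec_univ {d : ℕ} (δ : Fin 2 × Fin d → ℝ) : ∑ a, vec δ a = 2 * ∑ p, δ p := by
  rw [Fintype.sum_sum_type]
  simp only [vec, Sum.elim_inl, Sum.elim_inr]
  rw [sum_allcols, Fin.sum_univ_two, sum_rows]; ring

/-- the index arrangement -/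
def idx (d m : ℕ) (p : Fin 2 × Fin d) : ℕ :=
  if p.1 = 0 then (if (p.2 : ℕ) < m then p.2 else m + p.2)
  else (if (p.2 : ℕ) < m then m + p.2 else d + p.2)

theorem idx_lt {d m : ℕ} (hm : m ≤ d) (p : Fin 2 × Fin d) : idx d m p < 2 * d := by
  have := p.2.2
  unfold idx
  split_ifs <;> omega

theorem idx_inj {d m : ℕ} (hm : m ≤ d) : Function.Injective (idx d m) := by
  rintro ⟨i, s⟩ ⟨j, t⟩ h
  have := s.2
  have := t.2
  unfold idx at h
  simp only at h
  have hi : i = 0 ∨ i = 1 := by omega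
  have hj : j = 0 ∨ j = 1 := by omega
  rw [Prod.mk.injEq, Fin.ext_iff (a := s)]
  rcases hi with rfl | rfl <;> rcases hj with rfl | rfl <;> simp at h ⊢ <;> split_ifs at h <;> omega

/-- arrangement as an equivalence -/
noncomputable def idxE {d m : ℕ} (hm : m ≤ d) : Fin 2 × Fin d ≃ Fin (2 * d) :=
  Equiv.ofBijective (fun p => ⟨idx d m p, idx_lt hm p⟩)
    ((Fintype.bijective_iff_injective_and_card _).2
      ⟨fun p q h => idx_inj hm (by simpa using h), by simp⟩)

/-- first `p` columns -/
def firstS (d p : ℕ) : Finset (Fin d) := univ.filter fun s => (s : ℕ) < p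

theorem firstS_sum {d p : ℕ} (hp : p ≤ d) (f : ℕ → ℝ) :
    ∑ s ∈ firstS d p, f s = ∑ i ∈ range p, f i := by
  unfold firstS
  rw [Finset.sum_filter, Fin.sum_univ_eq_sum_range (fun i => if i < p then f i else 0),
    ← Finset.sum_filter]
  congr 1
  ext i
  simp
  omega

theorem firstS_card {d p : ℕ} (hp : p ≤ d) : (firstS d p).card = p := by
  unfold firstS
  rw [Fin.card_filter_val_lt]
  omega

theorem arr_col {d m : ℕ} (L : ℕ → ℝ) (s : Fin d) : colS (L ∘ idx d m) s =
    (fun s => if s < m then L s + L (m + s) else L (m + s) + L (d + s)) (s : ℕ) := by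
  simp only [colS, Fin.sum_univ_two, Function.comp, idx]
  by_cases h : (s : ℕ) < m <;> simp [h]

theorem arr_cols_lo {d m p : ℕ} (L : ℕ → ℝ) (hpm : p ≤ m) (hp : p ≤ d) :
    ∑ s ∈ firstS d p, colS (L ∘ idx d m) s = P L p + P L (m + p) - P L m := by
  simp only [arr_col]
  rw [firstS_sum hp (fun s => if s < m then L s + L (m + s) else L (m + s) + L (d + s))]
  clear hp
  induction p with
  | zero => simp [P]
  | succ p ih =>
    rw [Finset.sum_range_succ, ih (by omega), if_pos (by omega), ← add_assoc m p 1, P_succ, P_succ]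
    ring

theorem arr_cols_hi {d m p : ℕ} (L : ℕ → ℝ) (hpm : m ≤ p) (hp : p ≤ d) :
    ∑ s ∈ firstS d p, colS (L ∘ idx d m) s = P L (m + p) + P L (d + p) - P L (d + m) := by
  induction p, hpm using Nat.le_induction with
  | base => rw [arr_cols_lo L le_rfl hp]; ring
  | succ p hmp ih =>
    have ih := ih (by omega)
    simp only [arr_col] at ih ⊢
    rw [firstS_sum (by omega) (fun s => if s < m then L s + L (m + s) else L (m + s) + L (d + s))] at ih ⊢
    rw [Finset.sum_range_succ, ih, if_neg (by omega), ← add_assoc m p 1, P_succ, ← add_assoc d p 1,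
      P_succ]
    ring

theorem arr_row {d m : ℕ} (L : ℕ → ℝ) (hm : m ≤ d) :
    rowS (L ∘ idx d m) 0 = P L m + P L (m + d) - P L (2 * m) := by
  have h1 : rowS (L ∘ idx d m) 0 = ∑ s : Fin d, (fun s => if s < m then L s else L (m + s)) (s : ℕ) := by
    simp only [rowS, Function.comp, idx]
    apply Finset.sum_congr rfl
    intro s _
    by_cases h : (s : ℕ) < m <;> simp [h]
  rw [h1, Fin.sum_univ_eq_sum_range (fun s => if s < m then L s else L (m + s))]
  clear h1
  induction d, hm using Nat.le_induction with
  | base =>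
    rw [← two_mul]
    simp only [P, add_sub_cancel_right]
    apply Finset.sum_congr rfl
    intro i hi
    rw [if_pos (by simpa using hi)]
  | succ p hmp ih =>
    rw [Finset.sum_range_succ, ih, if_neg (by omega), ← add_assoc, P_succ]; ring

end QQ


namespace QQ

theorem firstS_univ (d : ℕ) : firstS d d = univ := by
  ext s; simp [firstS]

theorem arr_total {d m : ℕ} (L : ℕ → ℝ) (hm : m ≤ d) :
    ∑ p, (L ∘ idx d m) p = P L (2 * d) := by
  rw [← sum_allcols, ← firstS_univ, arr_cols_hi L hm le_rfl, two_mul, add_comm m d]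
  ring

theorem maj_base {d : ℕ} (hd : 2 < d) {L : ℕ → ℝ} (h0 : ∀ i, 0 ≤ L i)
    {δ : Fin 2 × Fin d → ℝ} (h : Good L δ)
    (H : ∀ S : Finset (Fin d), 1 ≤ S.card → S.card ≤ d - 1 →
      (P L (2 * d) + ∑ s ∈ S, colS δ s ≤ P L (S.card + 1) + P L (d + S.card + 1)) ∨
      (∑ s ∈ S, colS δ s ≤ P L S.card + P L (d + S.card) - P L d)) :
    Majorizes (vec δ) (vec (L ∘ idx d 0)) := by
  have hmono := P_mono h0
  have t1 : ∀ p, p ≤ d → P L p + P L (d + p) ≤ maxSum (vec (L ∘ idx d 0)) (p + 1) := by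
    intro p hp
    have := le_vec1 (L ∘ idx d 0) 0 (firstS d p) (p + 1) (by rw [firstS_card hp])
    rw [arr_row L (Nat.zero_le d), arr_cols_hi L (Nat.zero_le p) hp] at this
    simp only [zero_add, mul_zero, P_zero, add_zero] at this
    linarith
  have t2 : ∀ p, p ≤ d → P L (2 * d) + (P L p + P L (d + p) - P L d) ≤
      maxSum (vec (L ∘ idx d 0)) (p + 2) := by
    intro p hp
    have := le_vec2 (L ∘ idx d 0) (firstS d p) (p + 2) (by rw [firstS_card hp])
    rw [arr_total L (Nat.zero_le d), arr_cols_hi L (Nat.zero_le p) hp] at this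
    simp only [zero_add, add_zero] at this
    linarith
  refine ⟨?_, by rw [sum_vec_univ, sum_vec_univ, arr_total L (Nat.zero_le d), h.2]⟩
  intro k
  rcases Nat.eq_zero_or_pos k with rfl | hk1
  · simp [maxSum_zero]
  by_cases hk : k ≤ d + 2
  swap
  · rw [maxSum_big, maxSum_big] <;> simp <;> omega
  refine vec_le h0 h _ k hk1 hk ?_ ?_ ?_ ?_
  · rintro rfl s
    have h1 := col_le h s
    have h2 := t1 0 (Nat.zero_le d)
    have h3 := hmono (show 2 ≤ d by omega)
    simp only [P_zero, add_zero, zero_add] at h2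
    linarith
  · intro hk2
    obtain ⟨p, rfl⟩ := Nat.exists_eq_add_of_le' hk2
    have h2 := t2 p (by omega)
    have h3 := hmono (show d ≤ d + p by omega)
    have h4 := hmono (show 0 ≤ p by omega)
    rw [P_zero] at h4
    linarith
  · rintro i S rfl
    have hS : S.card ≤ d := by simpa using Finset.card_le_univ S
    exact (row_cols_le h i S).trans (t1 _ hS)
  · rintro S rfl
    have hS : S.card ≤ d := by simpa using Finset.card_le_univ S
    have h2 := t2 _ hS
    by_cases hS0 : S.card = 0
    · rw [hS0] at h2 ⊢
      rw [Finset.card_eq_zero] at hS0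
      rw [hS0]
      simpa [P_zero] using h2
    by_cases hSd : S.card = d
    · have h5 := cols_le h S
      rw [hSd] at h2 h5 ⊢
      rw [← two_mul] at h2
      linarith
    rcases H S (by omega) (by omega) with h3 | h3
    · have h4 := t1 (S.card + 1) (by omega)
      rw [← add_assoc] at h4
      linarith
    · linarith

/-- Case (1). -/
theorem case1 {d : ℕ} (hd : 2 < d) {L : ℕ → ℝ} (h0 : ∀ i, 0 ≤ L i) (hz : ∀ i, 3 ≤ i → L i = 0)
    {δ : Fin 2 × Fin d → ℝ} (h : Good L δ) : Majorizes (vec δ) (vec (L ∘ idx d 0)) := by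
  have hP : ∀ n, 3 ≤ n → P L n = P L 3 := by
    intro n hn
    induction n, hn using Nat.le_induction with
    | base => rfl
    | succ n hn ih => rw [P_succ, ih, hz n hn, add_zero]
  apply maj_base hd h0 h
  intro S h1 h2
  left
  have h3 := cols_le h S
  rw [hP (2 * d) (by omega), hP (d + S.card + 1) (by omega)]
  by_cases hS : S.card = 1
  · rw [hS] at h3 ⊢
    norm_num at h3 ⊢
    linarith
  · rw [hP _ (by omega)] at h3
    rw [hP (S.card + 1) (by omega)]
    linarith

theorem P_const {L : ℕ → ℝ} {a n : ℕ} {c : ℝ} (ha : ∀ i, a ≤ i → i < n → L i = c) :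
    ∀ k, a ≤ k → k ≤ n → P L k = P L a + ((k : ℝ) - a) * c := by
  intro k hk
  induction k, hk using Nat.le_induction with
  | base => intro _; ring
  | succ k hk ih =>
    intro h
    rw [P_succ, ih (by omega), ha k hk (by omega)]
    push_cast
    ring

/-- Case (2). -/
theorem case2 {d : ℕ} (hd : 2 < d) {L : ℕ → ℝ} (h0 : ∀ i, 0 ≤ L i) {c : ℝ}
    (hc : ∀ i, 1 ≤ i → i < 2 * d - 1 → L i = c)
    {δ : Fin 2 × Fin d → ℝ} (h : Good L δ) : Majorizes (vec δ) (vec (L ∘ idx d 0)) := by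
  have hP := P_const hc
  apply maj_base hd h0 h
  intro S h1 h2
  right
  have h3 := cols_le h S
  rw [hP (2 * S.card) (by omega) (by omega)] at h3
  rw [hP (S.card) (by omega) (by omega), hP (d + S.card) (by omega) (by omega),
    hP d (by omega) (by omega)]
  push_cast at h3 ⊢
  linarith

/-- Case (4). -/
theorem case4 {L : ℕ → ℝ} (h0 : ∀ i, 0 ≤ L i) (h23 : L 2 = L 3) (h34 : L 3 = L 4) (h5 : L 5 = 0)
    {δ : Fin 2 × Fin 3 → ℝ} (h : Good L δ) : Majorizes (vec δ) (vec (L ∘ idx 3 0)) := by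
  apply maj_base (by norm_num) h0 h
  intro S h1 h2
  have h3 := cols_le h S
  have : S.card = 1 ∨ S.card = 2 := by omega
  rcases this with hS | hS
  · left
    rw [hS] at h3 ⊢
    norm_num [P, Finset.sum_range_succ] at h3 ⊢
    linarith
  · right
    rw [hS] at h3 ⊢
    norm_num [P, Finset.sum_range_succ] at h3 ⊢
    linarith

/-- Case (3). -/
theorem case3 {d : ℕ} (hd : 2 < d) {L : ℕ → ℝ} (h0 : ∀ i, 0 ≤ L i) {c : ℝ}
    (hc : ∀ i, 2 ≤ i → i < 2 * d - 1 → L i = c)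
    (hb : 2 * ((d : ℝ) - 2) * c + L (2 * d - 1) ≤ L 1)
    {δ : Fin 2 × Fin d → ℝ} (h : Good L δ) : Majorizes (vec δ) (vec (L ∘ idx d 0)) ∨
      Majorizes (vec δ) (vec (L ∘ idx d 1)) := by
  have hP := P_const hc
  have hmono := P_mono h0
  have hT : P L (2 * d) = P L 2 + (2 * (d : ℝ) - 3) * c + L (2 * d - 1) := by
    have h1 := P_succ L (2 * d - 1)
    rw [show 2 * d - 1 + 1 = 2 * d by omega] at h1
    rw [h1, hP _ (by omega) le_rfl, Nat.cast_sub (by omega)]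
    push_cast
    ring
  have hP2 : P L 2 = L 0 + L 1 := by simp [P, Finset.sum_range_succ]
  have hP1 : P L 1 = L 0 := by simp [P]
  by_cases hrow : ∀ i, rowS δ i ≤ P L 2
  · right
    have h1d : 1 ≤ d := by omega
    have t2 : ∀ p, 1 ≤ p → p ≤ d → P L (2 * d) + P L (2 * p) ≤
        maxSum (vec (L ∘ idx d 1)) (p + 2) := by
      intro p hp1 hp
      have := le_vec2 (L ∘ idx d 1) (firstS d p) (p + 2) (by rw [firstS_card hp])
      rw [arr_total L h1d, arr_cols_hi L hp1 hp] at this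
      refine le_trans ?_ this
      by_cases hpd : p = d
      · subst hpd
        rw [show p + p = 2 * p by omega, add_comm 1 p]; linarith
      · rw [hP (2 * p) (by omega) (by omega), hP (1 + p) (by omega) (by omega),
          hP (d + p) (by omega) (by omega), hP (d + 1) (by omega) (by omega)]
        push_cast
        linarith
    refine ⟨?_, by rw [sum_vec_univ, sum_vec_univ, arr_total L h1d, h.2]⟩
    intro k
    rcases Nat.eq_zero_or_pos k with rfl | hk1
    · simp [maxSum_zero]
    by_cases hk : k ≤ d + 2
    swap
    · rw [maxSum_big, maxSum_big] <;> simp <;> omega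
    have hA0 : P L 2 ≤ maxSum (vec (L ∘ idx d 1)) 1 := by
      have h1 := le_vec0 (L ∘ idx d 1) ⟨0, by omega⟩
      rw [arr_col] at h1
      norm_num at h1
      linarith
    have hTT : 2 ≤ k → P L (2 * d) ≤ maxSum (vec (L ∘ idx d 1)) k := by
      intro hk2
      obtain ⟨p, rfl⟩ := Nat.exists_eq_add_of_le' hk2
      by_cases hp : p = 0
      · subst hp
        have := le_vec2 (L ∘ idx d 1) ∅ 2 (by simp)
        rw [arr_total L h1d] at this
        simpa using this
      · have h2 := t2 p (by omega) (by omega)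
        have h4 := hmono (show 0 ≤ 2 * p by omega)
        rw [P_zero] at h4
        linarith
    refine vec_le h0 h _ k hk1 hk ?_ hTT ?_ ?_
    · rintro rfl s
      exact (col_le h s).trans hA0
    · rintro i S rfl
      have hS : S.card ≤ d := by simpa using Finset.card_le_univ S
      by_cases hS0 : S.card = 0
      · rw [hS0]
        rw [Finset.card_eq_zero] at hS0
        rw [hS0]
        simpa using (hrow i).trans hA0
      refine (row_cols_le h i S).trans ?_
      by_cases hS1 : S.card = 1
      · rw [hS1]
        have := le_vec1 (L ∘ idx d 1) 0 (firstS d 1) 2 (by rw [firstS_card h1d])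
        rw [arr_row L h1d, arr_cols_hi L le_rfl h1d] at this
        norm_num at this ⊢
        rw [add_comm 1 d] at this
        linarith
      · have h2 := t2 (S.card - 1) (by omega) (by omega)
        have e1 : S.card - 1 + 2 = S.card + 1 := by omega
        rw [e1] at h2
        have h3 := hmono (show d + S.card ≤ 2 * d by omega)
        have h4 := hmono (show S.card ≤ 2 * (S.card - 1) by omega)
        linarith
    · rintro S rfl
      have hS : S.card ≤ d := by simpa using Finset.card_le_univ S
      by_cases hS0 : S.card = 0
      · have := hTT (by omega)
        rw [Finset.card_eq_zero] at hS0
        rw [hS0] at this ⊢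
        simpa using this
      · linarith [t2 _ (by omega) hS, cols_le h S]
  · left
    push Not at hrow
    obtain ⟨i, hi⟩ := hrow
    apply maj_base hd h0 h
    intro S h1 h2
    by_cases hS : S.card = 1
    · left
      have h3 := row_cols_le h i S
      rw [hS] at h3 ⊢
      rw [hP (d + 1) (by omega) (by omega)] at h3
      rw [show d + 1 + 1 = d + 2 by omega, hP (d + 2) (by omega) (by omega), hT]
      norm_num at h3 ⊢
      nlinarith
    · right
      have h3 := cols_le h S
      rw [hP (2 * S.card) (by omega) (by omega)] at h3
      rw [hP (S.card) (by omega) (by omega), hP (d + S.card) (by omega) (by omega),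
        hP d (by omega) (by omega)]
      push_cast at h3 ⊢
      linarith

end QQ


namespace QQ

theorem exists_maxSum {ι : Type*} [Fintype ι] (x : ι → ℝ) (k : ℕ) (hk : k ≤ Fintype.card ι) :
    ∃ A : Finset ι, A.card = k ∧ maxSum x k = ∑ i ∈ A, x i := by
  have hfin : {s : ℝ | ∃ A : Finset ι, A.card = k ∧ s = ∑ i ∈ A, x i}.Finite := by
    apply (Set.finite_range (fun A : Finset ι => ∑ i ∈ A, x i)).subset
    rintro s ⟨A, _, rfl⟩
    exact ⟨A, rfl⟩
  obtain ⟨A, -, hA⟩ := Finset.exists_subset_card_eq (s := (Finset.univ : Finset ι)) (n := k)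
    (by simpa using hk)
  have hne : {s : ℝ | ∃ A : Finset ι, A.card = k ∧ s = ∑ i ∈ A, x i}.Nonempty := ⟨_, A, hA, rfl⟩
  exact hne.csSup_mem hfin

theorem weight_le {n : ℕ} {L : ℕ → ℝ} (hL : Antitone L) (c : Fin n → ℝ) (hc0 : ∀ j, 0 ≤ c j)
    (hc1 : ∀ j, c j ≤ 1) (k : ℕ) (hk : k ≤ n) (hs : ∑ j, c j = k) :
    ∑ j, c j * L j ≤ P L k := by
  have h1 : P L k = ∑ j : Fin n, (if (j : ℕ) < k then 1 else 0) * L j := by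
    rw [P, ← firstS_sum hk, firstS, Finset.sum_filter]
    simp
  have h2 : ∑ j : Fin n, (if (j : ℕ) < k then (1 : ℝ) else 0) = k := by
    have := firstS_card hk
    rw [firstS, Finset.card_filter] at this
    exact_mod_cast this
  have h3 : ∑ j : Fin n, (c j - (if (j : ℕ) < k then 1 else 0)) * (L j - L k) ≤ 0 := by
    apply Finset.sum_nonpos
    intro j _
    split_ifs with h
    · apply mul_nonpos_of_nonpos_of_nonneg
      · linarith [hc1 j]
      · linarith [hL h.le]
    · push Not at h
      apply mul_nonpos_of_nonneg_of_nonpos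
      · linarith [hc0 j]
      · linarith [hL h]
  have h4 : ∑ j : Fin n, (c j - (if (j : ℕ) < k then 1 else 0)) * (L j - L k) =
      ∑ j, c j * L j - ∑ j : Fin n, (if (j : ℕ) < k then 1 else 0) * L j
      - (∑ j, c j - ∑ j : Fin n, (if (j : ℕ) < k then (1 : ℝ) else 0)) * L k := by
    rw [← Finset.sum_sub_distrib, ← Finset.sum_sub_distrib, Finset.sum_mul,
      ← Finset.sum_sub_distrib]
    apply Finset.sum_congr rfl
    intro j _
    ring
  rw [h4, hs, h2, ← h1] at h3
  linarith

/-- doubly stochastic images are good -/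
theorem good_of_ds {d : ℕ} {L : ℕ → ℝ} (hL : Antitone L)
    (w : Fin 2 × Fin d → Fin (2 * d) → ℝ) (hw : ∀ p j, 0 ≤ w p j) (h1 : ∀ p, ∑ j, w p j = 1)
    (h2 : ∀ j, ∑ p, w p j = 1) : Good L (fun p => ∑ j, w p j * L j) := by
  constructor
  · intro A
    have : ∑ p ∈ A, ∑ j, w p j * L j = ∑ j, (∑ p ∈ A, w p j) * L j := by
      rw [Finset.sum_comm]
      simp only [Finset.sum_mul]
    rw [this]
    apply weight_le hL
    · intro j; exact Finset.sum_nonneg fun p _ => hw p j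
    · intro j
      rw [← h2 j]
      exact Finset.sum_le_sum_of_subset_of_nonneg (Finset.subset_univ _) fun p _ _ => hw p j
    · simpa using Finset.card_le_univ A
    · rw [Finset.sum_comm]; simp [h1]
  · rw [Finset.sum_comm]
    simp only [← Finset.sum_mul, h2, one_mul]
    rw [Fin.sum_univ_eq_sum_range]; rfl

theorem good_equiv {d : ℕ} {L : ℕ → ℝ} (hL : Antitone L) (e : Fin 2 × Fin d ≃ Fin (2 * d)) :
    Good L (fun p => L (e p)) := by
  have := good_of_ds hL (fun p j => if j = e p then 1 else 0)
    (by intro p j; split_ifs <;> norm_num) (by intro p; simp)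
    (by
      intro j
      have : ∀ p, (j = e p) ↔ (e.symm j = p) := fun p => by rw [Equiv.symm_apply_eq]
      simp [this])
  simpa using this

/-- the rotated diagonal -/
def pth {d : ℕ} (δ : Fin 2 × Fin d → ℝ) (p q : Fin 2 × Fin d) (t : ℝ) : Fin 2 × Fin d → ℝ :=
  fun x => δ x + t * (δ q - δ p) * ((if x = p then 1 else 0) - (if x = q then 1 else 0))

theorem pth_row {d : ℕ} (δ : Fin 2 × Fin d → ℝ) (s s' : Fin d) (t : ℝ) :
    rowS (pth δ (1, s) (0, s') t) 0 = rowS δ 0 + t * (δ (1, s) - δ (0, s')) := by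
  simp only [rowS, pth, Finset.sum_add_distrib, ← Finset.mul_sum, Finset.sum_sub_distrib]
  simp
  ring

theorem pth_cols {d : ℕ} (δ : Fin 2 × Fin d → ℝ) (s s' : Fin d) (t : ℝ)
    (S : Finset (Fin d)) (hs : s ∈ S) (hs' : s' ∉ S) :
    ∑ x ∈ S, colS (pth δ (1, s) (0, s') t) x =
      ∑ x ∈ S, colS δ x - t * (δ (1, s) - δ (0, s')) := by
  rw [sum_cols, sum_cols]
  simp only [pth, Finset.sum_add_distrib, ← Finset.mul_sum, Finset.sum_sub_distrib]
  simp [hs, hs']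
  ring

theorem pth_total {d : ℕ} (δ : Fin 2 × Fin d → ℝ) (p q : Fin 2 × Fin d) (t : ℝ) :
    ∑ x, pth δ p q t x = ∑ x, δ x := by
  simp only [pth, Finset.sum_add_distrib, ← Finset.mul_sum, Finset.sum_sub_distrib]
  simp

/-- What statement (A) provides. -/
def HypA (d : ℕ) (hd : 2 < d) (L : ℕ → ℝ) : Prop :=
  ∀ m, m ≤ d → ∀ t : ℝ, 0 ≤ t → t ≤ 1 → ∃ e : Fin 2 × Fin d ≃ Fin (2 * d), ∀ k,
    maxSum (vec (pth (L ∘ idx d m) (1, ⟨0, by omega⟩) (0, ⟨d - 1, by omega⟩) t)) k ≤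
      maxSum (vec (fun p => L (e p))) k

theorem path_low {d m : ℕ} (hd : 2 < d) (L : ℕ → ℝ) (hm1 : 1 ≤ m) (hm : m ≤ d - 1) (t : ℝ) :
    P L m + P L (d + m) - P L (2 * m) + t * (L m - L (m + d - 1)) ≤
      maxSum (vec (pth (L ∘ idx d m) (1, ⟨0, by omega⟩) (0, ⟨d - 1, by omega⟩) t)) 1 ∧
    P L (2 * d) + P L (2 * m) - t * (L m - L (m + d - 1)) ≤
      maxSum (vec (pth (L ∘ idx d m) (1, ⟨0, by omega⟩) (0, ⟨d - 1, by omega⟩) t)) (m + 2) := by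
  have e1 : (L ∘ idx d m) (1, ⟨0, by omega⟩) = L m := by
    simp only [idx, Function.comp]
    rw [if_neg (by decide), if_pos (by omega), add_zero]
  have e2 : (L ∘ idx d m) (0, ⟨d - 1, by omega⟩) = L (m + d - 1) := by
    simp only [idx, Function.comp]
    rw [if_pos trivial, if_neg (by omega)]
    congr 1; omega
  constructor
  · have := le_vec1 (pth (L ∘ idx d m) (1, ⟨0, by omega⟩) (0, ⟨d - 1, by omega⟩) t) 0 ∅ 1 (by simp)
    rw [pth_row, arr_row L (by omega), e1, e2, add_comm m d] at this
    simp only [Finset.sum_empty, add_zero] at this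
    rw [add_comm m d]
    exact this
  · have := le_vec2 (pth (L ∘ idx d m) (1, ⟨0, by omega⟩) (0, ⟨d - 1, by omega⟩) t) (firstS d m)
      (m + 2) (by rw [firstS_card (by omega)])
    rw [pth_total, pth_cols _ _ _ _ _ (by simp [firstS]; omega) (by simp [firstS]; omega),
      arr_total L (by omega), arr_cols_lo L le_rfl (by omega), e1, e2, ← two_mul m] at this
    linarith

theorem dichotomy {d m : ℕ} {L : ℕ → ℝ} (h0 : ∀ i, 0 ≤ L i) (hL : Antitone L) (hm2 : 2 ≤ m)
    (hm : m ≤ d - 1) (hpos : 0 < L (m + 1)) {δ : Fin 2 × Fin d → ℝ} (h : Good L δ)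
    (hF : P L (2 * d) + P L (2 * m) ≤ maxSum (vec δ) (m + 2)) :
    maxSum (vec δ) 1 ≤ P L m + P L (d + m) - P L (2 * m) := by
  have hmono := P_mono h0
  have hpm : P L (m + 1) < P L (2 * m) := by
    have h1 := hmono (show m + 2 ≤ 2 * m by omega)
    have h2 := P_succ L (m + 1)
    rw [show m + 1 + 1 = m + 2 by omega] at h2
    linarith
  have hP0 : 0 ≤ P L (m + 1) := by
    have := hmono (Nat.zero_le (m + 1)); rwa [P_zero] at this
  obtain ⟨A, hA, hs⟩ := exists_maxSum (vec δ) (m + 2) (by simp; omega)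
  rw [hs] at hF
  obtain ⟨S, ⟨h1, h2⟩ | ⟨i, h1, h2⟩ | ⟨h1, h2⟩⟩ := vec_cases δ A
  · exfalso
    have : ∑ s ∈ S, colS δ s ≤ P L (2 * d) := by
      rw [← h.2, ← sum_allcols]
      exact Finset.sum_le_sum_of_subset_of_nonneg (Finset.subset_univ _)
        fun s _ _ => colS_nonneg h0 h s
    linarith
  · exfalso
    have h3 := row_cols_le h i S
    have h4 : S.card = m + 1 := by omega
    rw [h4] at h3
    have h5 := hmono (show d + (m + 1) ≤ 2 * d by omega)
    linarith
  · have h4 : S.card = m := by omega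
    rw [h2, h.2] at hF
    have h5 := fun i => row_le_of_cols h i S (by rw [h4]; linarith)
    rw [h4] at h5
    apply vec_le h0 h _ 1 le_rfl (by omega)
    · intro _ s
      have := col_le h s
      have h6 := hmono hm2
      have h7 := hmono (show 2 * m ≤ d + m by omega)
      linarith
    · intro h; omega
    · intro i S' hS'
      have : S' = ∅ := by rw [← Finset.card_eq_zero]; omega
      rw [this]
      simpa using h5 i
    · intro S' hS'; omega

theorem step {d m : ℕ} (hd : 2 < d) {L : ℕ → ℝ} (h0 : ∀ i, 0 ≤ L i) (hL : Antitone L)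
    (HA : HypA d hd L) (hm2 : 2 ≤ m) (hm : m ≤ d - 1) (hpos : 0 < L (m + 1)) :
    L m = L (m + d - 1) := by
  by_contra hne
  have hlt : 0 < L m - L (m + d - 1) := by
    have h1 := hL (show m ≤ m + d - 1 by omega)
    have h2 := lt_of_le_of_ne h1 (Ne.symm hne)
    linarith
  have hev : ∀ᶠ ε in nhdsWithin (0 : ℝ) (Set.Ioi 0), ∀ e : Fin 2 × Fin d ≃ Fin (2 * d),
      maxSum (vec (fun p => L (e p))) (m + 2) < P L (2 * d) + P L (2 * m) →
      maxSum (vec (fun p => L (e p))) (m + 2) <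
        P L (2 * d) + P L (2 * m) - ε * (L m - L (m + d - 1)) := by
    rw [Filter.eventually_all]
    intro e
    by_cases he : maxSum (vec (fun p => L (e p))) (m + 2) < P L (2 * d) + P L (2 * m)
    · have ht : Filter.Tendsto (fun ε : ℝ => P L (2 * d) + P L (2 * m) - ε * (L m - L (m + d - 1)))
          (nhdsWithin 0 (Set.Ioi 0)) (nhds (P L (2 * d) + P L (2 * m) - 0 * (L m - L (m + d - 1)))) := by
        apply Filter.Tendsto.mono_left _ nhdsWithin_le_nhds
        apply Continuous.tendsto
        fun_prop
      filter_upwards [ht.eventually_const_lt (by simpa using he)] with ε hε _ using hε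
    · exact Filter.Eventually.of_forall fun ε h => absurd h he
  have hev2 : ∀ᶠ ε in nhdsWithin (0 : ℝ) (Set.Ioi 0), ε ∈ Set.Ioc (0 : ℝ) 1 :=
    Ioc_mem_nhdsGT one_pos
  obtain ⟨ε, hε, hε0, hε1⟩ := (hev.and hev2).exists
  obtain ⟨e, he⟩ := HA m (by omega) ε hε0.le hε1
  obtain ⟨l1, l2⟩ := path_low hd L (by omega) hm ε
  have g := good_equiv hL e
  by_cases hF : P L (2 * d) + P L (2 * m) ≤ maxSum (vec (fun p => L (e p))) (m + 2)
  · have := dichotomy h0 hL hm2 hm hpos g hF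
    have := he 1
    have := mul_pos hε0 hlt
    linarith
  · have := hε e (not_le.1 hF)
    have := he (m + 2)
    linarith

theorem row_ite {d : ℕ} (e : Fin 2 × Fin d ≃ Fin (2 * d)) (i : Fin 2) (j : Fin (2 * d)) (w : ℝ) :
    ∑ s, (if e (i, s) = j then w else 0) = if (e.symm j).1 = i then w else 0 := by
  have : ∀ s, (e (i, s) = j) ↔ ((e.symm j).1 = i ∧ (e.symm j).2 = s) := by
    intro s
    rw [← Equiv.eq_symm_apply, Prod.ext_iff]
    simp only [eq_comm]
  simp only [this]
  by_cases h : (e.symm j).1 = i <;> simp [h]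

theorem last {d : ℕ} (hd : 2 < d) {L : ℕ → ℝ} (h0 : ∀ i, 0 ≤ L i) (hL : Antitone L)
    (HA : HypA d hd L) {c : ℝ} (hc : ∀ i, 2 ≤ i → i < 2 * d - 1 → L i = c) (hcpos : 0 < c)
    (hb : c < L 1) (hb2 : L 1 < 2 * ((d : ℝ) - 2) * c + L (2 * d - 1))
    (hde : 0 < ((d : ℝ) - 3) * c + L (2 * d - 1)) : False := by
  have hP := P_const hc
  have hmono := P_mono h0
  have hd' : (3 : ℝ) ≤ d := by exact_mod_cast hd
  have hT : P L (2 * d) = P L 2 + (2 * (d : ℝ) - 3) * c + L (2 * d - 1) := by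
    have h1 := P_succ L (2 * d - 1)
    rw [show 2 * d - 1 + 1 = 2 * d by omega] at h1
    rw [h1, hP _ (by omega) le_rfl, Nat.cast_sub (by omega)]
    push_cast
    ring
  have hP2 : P L 2 = L 0 + L 1 := by simp [P, Finset.sum_range_succ]
  have hP1 : P L 1 = L 0 := by simp [P]
  have hab : L 1 ≤ L 0 := hL (by omega)
  have hlc : ∀ n, 2 ≤ n → L n ≤ c := by
    intro n hn
    rw [← hc 2 le_rfl (by omega)]
    exact hL hn
  have hdc : 0 < ((d : ℝ) - 2) * c := mul_pos (by linarith) hcpos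
  obtain ⟨u, hu1, hu2⟩ : ∃ u, max 0 (L 1 - (d - 1) * c) < u ∧
      u < min (L 1 - c) (((d : ℝ) - 3) * c + L (2 * d - 1)) := by
    apply _root_.exists_between
    apply max_lt <;> apply lt_min <;> nlinarith
  rw [max_lt_iff] at hu1
  rw [lt_min_iff] at hu2
  have hgap : 0 < L 1 - c := by linarith
  obtain ⟨e, he⟩ := HA 1 (by omega) (u / (L 1 - c)) (div_nonneg hu1.1.le hgap.le)
    ((div_le_one hgap).2 hu2.1.le)
  obtain ⟨l1, l2⟩ := path_low hd L le_rfl (by omega) (u / (L 1 - c))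
  have e1 : L (1 + d - 1) = c := hc _ (by omega) (by omega)
  rw [e1, div_mul_cancel₀ _ hgap.ne'] at l1 l2
  have g := good_equiv hL e
  have f1 := l1.trans (he 1)
  have f3 := l2.trans (he (1 + 2))
  clear l1 l2 he
  rw [hP (d + 1) (by omega) (by omega)] at f1
  norm_num at f1 f3
  -- a large row
  obtain ⟨A, hA, hs⟩ := exists_maxSum (vec (fun p => L (e p))) 1 (by simp)
  rw [hs] at f1
  obtain ⟨i, hi⟩ : ∃ i, L 0 + (d - 1) * c + u ≤ rowS (fun p => L (e p)) i := by
    obtain ⟨S, ⟨h1, h2⟩ | ⟨i, h1, h2⟩ | ⟨h1, h2⟩⟩ := vec_cases (fun p => L (e p)) A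
    · exfalso
      have := cols_le g S
      rw [h1, hA] at this
      norm_num at this
      nlinarith
    · refine ⟨i, ?_⟩
      have : S = ∅ := by rw [← Finset.card_eq_zero]; omega
      rw [h2, this] at f1
      simp only [Finset.sum_empty] at f1
      nlinarith
    · omega
  have hz : (0 : ℕ) < 2 * d := by omega
  have ho : (1 : ℕ) < 2 * d := by omega
  have hrow : rowS (fun p => L (e p)) i ≤ d * c +
      (if (e.symm ⟨0, hz⟩).1 = i then L 0 - c else 0) +
      (if (e.symm ⟨1, ho⟩).1 = i then L 1 - c else 0) := by
    rw [← row_ite, ← row_ite]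
    have : (d : ℝ) * c = ∑ _s : Fin d, c := by simp
    rw [this, ← Finset.sum_add_distrib, ← Finset.sum_add_distrib]
    apply Finset.sum_le_sum
    intro s _
    by_cases h0' : ((e (i, s)) : ℕ) = 0
    · have : e (i, s) = ⟨0, hz⟩ := Fin.ext h0'
      simp [this]
    by_cases h1' : ((e (i, s)) : ℕ) = 1
    · have : e (i, s) = ⟨1, ho⟩ := Fin.ext h1'
      simp [this]
    · have := hlc (e (i, s)) (by omega)
      simp only [Fin.ext_iff, h0', h1', if_false]
      linarith
  have hr0 : (e.symm ⟨0, hz⟩).1 = i := by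
    by_contra hne
    rw [if_neg hne] at hrow
    split_ifs at hrow <;> nlinarith
  have hr1 : (e.symm ⟨1, ho⟩).1 = i := by
    by_contra hne
    rw [if_neg hne, if_pos hr0] at hrow
    nlinarith
  have hent : ∀ j s, j ≠ i → L (e (j, s)) ≤ c := by
    intro j s hj
    apply hlc
    by_contra hlt
    have : ((e (j, s)) : ℕ) = 0 ∨ ((e (j, s)) : ℕ) = 1 := by omega
    rcases this with h | h
    · have : e (j, s) = ⟨0, hz⟩ := Fin.ext h
      rw [← this] at hr0
      simp at hr0
      exact hj hr0
    · have : e (j, s) = ⟨1, ho⟩ := Fin.ext h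
      rw [← this] at hr1
      simp at hr1
      exact hj hr1
  have hcol : ∀ s, colS (fun p => L (e p)) s ≤ L 0 + c := by
    intro s
    simp only [colS, Fin.sum_univ_two]
    by_cases hi0 : i = 0
    · linarith [hent 1 s (by rw [hi0]; decide), hL (Nat.zero_le (e (0, s)))]
    · linarith [hent 0 s (Ne.symm hi0), hL (Nat.zero_le (e (1, s)))]
  have fub : maxSum (vec (fun p => L (e p))) 3 ≤
      P L (2 * d) + max (L 0 + c) (P L 2 - (((d : ℝ) - 3) * c + L (2 * d - 1))) := by
    have m1 := le_max_left (L 0 + c) (P L 2 - (((d : ℝ) - 3) * c + L (2 * d - 1)))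
    have m2 := le_max_right (L 0 + c) (P L 2 - (((d : ℝ) - 3) * c + L (2 * d - 1)))
    apply vec_le h0 g _ 3 (by omega) (by omega)
    · intro h; omega
    · intro _; linarith [h0 0]
    · intro i S hS
      have h3 := row_cols_le g i S
      have h4 : S.card = 2 := by omega
      rw [h4, hP (d + 2) (by omega) (by omega)] at h3
      push_cast at h3
      linarith
    · intro S hS
      have h4 : S.card = 1 := by omega
      obtain ⟨s, rfl⟩ := Finset.card_eq_one.1 h4
      simp only [Finset.sum_singleton]
      linarith [hcol s]
  have : max (L 0 + c) (P L 2 - (((d : ℝ) - 3) * c + L (2 * d - 1))) < P L 2 - u := by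
    apply max_lt <;> linarith
  linarith

end QQ


namespace QQ

theorem perm_of_map_eq {ι : Type*} [Fintype ι] [DecidableEq ι] (f g : ι → ℝ)
    (h : (univ : Finset ι).val.map f = (univ : Finset ι).val.map g) :
    ∃ σ : Equiv.Perm ι, f = g ∘ σ := by
  classical
  have hc : ∀ c : ℝ, Nonempty ({x // f x = c} ≃ {x // g x = c}) := by
    intro c
    have h1 := congrArg (Multiset.count c) h
    rw [Multiset.count_map, Multiset.count_map] at h1
    refine ⟨Fintype.equivOfCardEq ?_⟩
    rw [Fintype.card_subtype, Fintype.card_subtype]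
    simp only [Finset.card_def, Finset.filter_val]
    simpa only [eq_comm] using h1
  let F : ∀ c : ℝ, {x // f x = c} ≃ {x // g x = c} := fun c => (hc c).some
  refine ⟨(Equiv.sigmaFiberEquiv f).symm.trans
    ((Equiv.sigmaCongrRight F).trans (Equiv.sigmaFiberEquiv g)), ?_⟩
  funext x
  simp only [Function.comp, Equiv.trans_apply, Equiv.sigmaFiberEquiv, Equiv.coe_fn_symm_mk,
    Equiv.coe_fn_mk, Equiv.sigmaCongrRight_apply, Sigma.map]
  exact ((F (f x)) ⟨x, rfl⟩).2.symm

theorem eig_diag {n : Type*} [Fintype n] [DecidableEq n] (v : n → ℝ) (M : Matrix n n ℂ)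
    (hM : M.IsHermitian) (h : M = Matrix.diagonal (fun i => (v i : ℂ))) :
    ∃ σ : Equiv.Perm n, hM.eigenvalues = v ∘ σ := by
  apply perm_of_map_eq
  have h1 := hM.roots_charpoly_eq_eigenvalues
  have h2 : M.charpoly.roots = Multiset.map (fun i => (v i : ℂ)) univ.val := by
    rw [h, Matrix.charpoly_diagonal, Polynomial.roots_prod]
    · simp
    · simp [Finset.prod_ne_zero_iff, Polynomial.X_sub_C_ne_zero]
  rw [h1] at h2
  have h3 := congrArg (Multiset.map Complex.re) h2
  simpa [Multiset.map_map, Function.comp_def] using h3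

theorem elim_comp {d : ℕ} (δ : Fin 2 × Fin d → ℝ) (σ : Equiv.Perm (Fin d)) (τ : Equiv.Perm (Fin 2)) :
    Sum.elim (colS δ ∘ σ) (rowS δ ∘ τ) = vec δ ∘ (Equiv.sumCongr σ τ) := by
  funext x
  rcases x with x | x <;> rfl

/-- partial traces of matrices without relevant off-diagonal entries -/
theorem ptrace_diag {d : ℕ} (X : Matrix (Fin 2 × Fin d) (Fin 2 × Fin d) ℂ)
    (δ : Fin 2 × Fin d → ℝ) (hd : ∀ p, X p p = (δ p : ℂ))
    (ho : ∀ p q, p ≠ q → (p.1 = q.1 ∨ p.2 = q.2) → X p q = 0) :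
    ptrace1 X = Matrix.diagonal (fun s => (colS δ s : ℂ)) ∧
    ptrace2 X = Matrix.diagonal (fun i => (rowS δ i : ℂ)) := by
  constructor
  · ext s t
    simp only [ptrace1, Matrix.of_apply]
    by_cases h : s = t
    · subst h
      simp [hd, colS]
    · rw [Matrix.diagonal_apply_ne _ h]
      exact Finset.sum_eq_zero fun i _ => ho _ _ (by simp [h]) (Or.inl rfl)
  · ext s t
    simp only [ptrace2, Matrix.of_apply]
    by_cases h : s = t
    · subst h
      simp [hd, rowS]
    · rw [Matrix.diagonal_apply_ne _ h]
      exact Finset.sum_eq_zero fun i _ => ho _ _ (by simp [h]) (Or.inr rfl)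

theorem eig_vec {d : ℕ} (X : Matrix (Fin 2 × Fin d) (Fin 2 × Fin d) ℂ)
    (δ : Fin 2 × Fin d → ℝ) (hd : ∀ p, X p p = (δ p : ℂ))
    (ho : ∀ p q, p ≠ q → (p.1 = q.1 ∨ p.2 = q.2) → X p q = 0)
    (h1 : (ptrace1 X).IsHermitian) (h2 : (ptrace2 X).IsHermitian) :
    ∃ e : Equiv.Perm (Fin d ⊕ Fin 2), Sum.elim h1.eigenvalues h2.eigenvalues = vec δ ∘ e := by
  obtain ⟨k1, k2⟩ := ptrace_diag X δ hd ho
  obtain ⟨σ, hσ⟩ := eig_diag _ _ h1 k1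
  obtain ⟨τ, hτ⟩ := eig_diag _ _ h2 k2
  refine ⟨Equiv.sumCongr σ τ, ?_⟩
  rw [hσ, hτ, ← elim_comp]

theorem maj_comp {ι κ ι' κ' : Type*} [Fintype ι] [Fintype κ] [Fintype ι'] [Fintype κ']
    (e : ι' ≃ ι) (f : κ' ≃ κ) (x : ι → ℝ) (y : κ → ℝ) :
    Majorizes (x ∘ e) (y ∘ f) ↔ Majorizes x y := by
  unfold Majorizes
  simp only [maxSum_equiv]
  rw [show ∑ i, (x ∘ e) i = ∑ i, x i from Equiv.sum_comp e x,
    show ∑ i, (y ∘ f) i = ∑ i, y i from Equiv.sum_comp f y]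

/-- rotation in the plane `p,q` -/
noncomputable def rot {ι : Type*} [DecidableEq ι] (p q : ι) (c s : ℝ) (x z : ι) : ℝ :=
  if x = p then (if z = p then c else 0) + (if z = q then s else 0)
  else if x = q then (if z = p then -s else 0) + (if z = q then c else 0)
  else if z = x then 1 else 0

theorem rot_sum_p {ι : Type*} [Fintype ι] [DecidableEq ι] (p q : ι) (c s : ℝ) (w : ι → ℝ) :
    ∑ z, rot p q c s p z * w z = c * w p + s * w q := by
  simp [rot, add_mul, Finset.sum_add_distrib]

theorem rot_sum_q {ι : Type*} [Fintype ι] [DecidableEq ι] (p q : ι) (hpq : p ≠ q) (c s : ℝ)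
    (w : ι → ℝ) : ∑ z, rot p q c s q z * w z = -s * w p + c * w q := by
  simp [rot, add_mul, Finset.sum_add_distrib, hpq.symm]

theorem rot_sum_o {ι : Type*} [Fintype ι] [DecidableEq ι] (p q x : ι) (hp : x ≠ p) (hq : x ≠ q)
    (c s : ℝ) (w : ι → ℝ) : ∑ z, rot p q c s x z * w z = w x := by
  simp [rot, hp, hq]

theorem rot_diag {ι : Type*} [Fintype ι] [DecidableEq ι] (p q : ι) (hpq : p ≠ q) (c s : ℝ)
    (hcs : c ^ 2 + s ^ 2 = 1) (w : ι → ℝ) (x : ι) :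
    ∑ z, rot p q c s x z * (w z * rot p q c s x z) =
      w x + s ^ 2 * (w q - w p) * ((if x = p then 1 else 0) - (if x = q then 1 else 0)) := by
  have hc : c ^ 2 = 1 - s ^ 2 := by linarith
  by_cases hp : x = p
  · subst hp
    rw [rot_sum_p]
    simp only [rot, if_true, hpq, if_false, hpq.symm]
    linear_combination (w x) * hc
  by_cases hq : x = q
  · subst hq
    rw [rot_sum_q p x hpq]
    simp only [rot, if_true, hpq, if_false, hpq.symm]
    linear_combination (w x) * hc
  · rw [rot_sum_o p q x hp hq]
    simp [rot, hp, hq]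

theorem rot_off {ι : Type*} [Fintype ι] [DecidableEq ι] (p q : ι) (hpq : p ≠ q) (c s : ℝ)
    (w : ι → ℝ) (x y : ι) (hxy : x ≠ y)
    (h : w p = w q ∨ ¬ ((x = p ∧ y = q) ∨ (x = q ∧ y = p))) :
    ∑ z, rot p q c s x z * (w z * rot p q c s y z) = 0 := by
  by_cases hp : x = p
  · subst hp
    rw [rot_sum_p]
    by_cases hy : y = q
    · subst hy
      have : w x = w y := by simpa using h
      simp only [rot, if_true, hpq, if_false, hpq.symm, this]
      ring
    · simp [rot, hy, hxy, hxy.symm, Ne.symm hy]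
  by_cases hq : x = q
  · subst hq
    rw [rot_sum_q p x hpq]
    by_cases hy : y = p
    · subst hy
      have : w y = w x := by simpa using h
      simp only [rot, if_true, hpq, if_false, hpq.symm, this]
      ring
    · simp [rot, hy, hxy, hxy.symm, Ne.symm hy]
  · rw [rot_sum_o p q x hp hq]
    simp [rot, hp, hq, hxy, Ne.symm hp, Ne.symm hq]

theorem spec {n : Type*} [Fintype n] [DecidableEq n] {C : Matrix n n ℂ} (hC : C.IsHermitian) :
    ∃ V ∈ Matrix.unitaryGroup n ℂ, C = V * Matrix.diagonal (fun i => (hC.eigenvalues i : ℂ)) * Vᴴ :=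
  ⟨hC.eigenvectorUnitary, hC.eigenvectorUnitary.2, by
    have := hC.spectral_theorem
    rw [Unitary.conjStarAlgAut_apply] at this
    exact this⟩

theorem exists_rot {d : ℕ} {C : Matrix (Fin 2 × Fin d) (Fin 2 × Fin d) ℂ} (hC : C.IsHermitian)
    (τ : Equiv.Perm (Fin 2 × Fin d)) (p q : Fin 2 × Fin d) (h1 : p.1 ≠ q.1) (h2 : p.2 ≠ q.2)
    (t : ℝ) (ht0 : 0 ≤ t) (ht1 : t ≤ 1) :
    ∃ U ∈ Matrix.unitaryGroup (Fin 2 × Fin d) ℂ,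
      (∀ x, (U * C * Uᴴ) x x = (pth (fun z => hC.eigenvalues (τ z)) p q t x : ℂ)) ∧
      (∀ x y, x ≠ y → (x.1 = y.1 ∨ x.2 = y.2) → (U * C * Uᴴ) x y = 0) := by
  obtain ⟨V, hV, hVC⟩ := spec hC
  have hpq : p ≠ q := fun h => h1 (by rw [h])
  set c := Real.sqrt (1 - t)
  set s := Real.sqrt t
  have hs2 : s ^ 2 = t := Real.sq_sqrt ht0
  have hc2 : c ^ 2 = 1 - t := Real.sq_sqrt (by linarith)
  have hcs : c ^ 2 + s ^ 2 = 1 := by rw [hs2, hc2]; ring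
  set W : Matrix (Fin 2 × Fin d) (Fin 2 × Fin d) ℂ :=
    Matrix.of fun x k => (rot p q c s x (τ.symm k) : ℂ) with hW
  have key : ∀ (w : Fin 2 × Fin d → ℝ) x y,
      (W * Matrix.diagonal (fun i => (w i : ℂ)) * Wᴴ) x y =
        ((∑ z, rot p q c s x z * (w (τ z) * rot p q c s y z) : ℝ) : ℂ) := by
    intro w x y
    rw [Matrix.mul_apply]
    simp only [Matrix.mul_diagonal, Matrix.conjTranspose_apply, hW, Matrix.of_apply]
    rw [← Equiv.sum_comp τ]
    push_cast
    apply Finset.sum_congr rfl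
    intro z _
    simp
    ring
  have hWu : W * Wᴴ = 1 := by
    ext x y
    have := key (fun _ => 1) x y
    simp only [Complex.ofReal_one, Matrix.diagonal_one, Matrix.mul_one] at this
    rw [this]
    by_cases hxy : x = y
    · subst hxy
      rw [rot_diag p q hpq c s hcs (fun _ => 1)]
      simp
    · rw [rot_off p q hpq c s (fun _ => 1) x y hxy (Or.inl rfl)]
      simp [hxy]
  have hVV : Vᴴ * V = 1 := Matrix.mem_unitaryGroup_iff'.1 hV
  refine ⟨W * Vᴴ, ?_, ?_⟩
  · refine mul_mem (Matrix.mem_unitaryGroup_iff.2 hWu) ?_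
    rw [Matrix.mem_unitaryGroup_iff, Matrix.star_eq_conjTranspose, Matrix.conjTranspose_conjTranspose]
    exact hVV
  have hX : (W * Vᴴ) * C * (W * Vᴴ)ᴴ =
      W * Matrix.diagonal (fun i => (hC.eigenvalues i : ℂ)) * Wᴴ := by
    rw [Matrix.conjTranspose_mul, Matrix.conjTranspose_conjTranspose]
    calc (W * Vᴴ) * C * (V * Wᴴ) = W * (Vᴴ * C * V) * Wᴴ := by simp only [Matrix.mul_assoc]
      _ = _ := by
        congr 2
        conv_lhs => rw [hVC]
        calc Vᴴ * (V * Matrix.diagonal (fun i => (hC.eigenvalues i : ℂ)) * Vᴴ) * V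
            = (Vᴴ * V) * Matrix.diagonal (fun i => (hC.eigenvalues i : ℂ)) * (Vᴴ * V) := by
              simp only [Matrix.mul_assoc]
          _ = _ := by rw [hVV, Matrix.one_mul, Matrix.mul_one]
  constructor
  · intro x
    rw [hX, key, rot_diag p q hpq c s hcs (fun z => hC.eigenvalues (τ z)), hs2]
    rfl
  · intro x y hxy hor
    rw [hX, key, rot_off p q hpq c s (fun z => hC.eigenvalues (τ z)) x y hxy, Complex.ofReal_zero]
    right
    rintro (⟨rfl, rfl⟩ | ⟨rfl, rfl⟩)
    · rcases hor with h | h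
      · exact h1 h
      · exact h2 h
    · rcases hor with h | h
      · exact h1 h.symm
      · exact h2 h.symm

/-- sequence of eigenvalues extended by zero -/
noncomputable def ext0 {n : ℕ} (μ : Fin n → ℝ) (i : ℕ) : ℝ := if h : i < n then μ ⟨i, h⟩ else 0

theorem ext0_fin {n : ℕ} (μ : Fin n → ℝ) (j : Fin n) : ext0 μ j = μ j := by
  simp [ext0]

theorem ext0_nonneg {n : ℕ} (μ : Fin n → ℝ) (h : ∀ j, 0 ≤ μ j) (i : ℕ) : 0 ≤ ext0 μ i := by
  unfold ext0
  split_ifs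
  · exact h _
  · exact le_rfl

theorem ext0_anti {n : ℕ} (μ : Fin n → ℝ) (h : ∀ j, 0 ≤ μ j) (hμ : Antitone μ) :
    Antitone (ext0 μ) := by
  intro a b hab
  by_cases hb : b < n
  · have ha : a < n := by omega
    simp only [ext0, ha, hb, dif_pos]
    exact hμ hab
  · rw [show ext0 μ b = 0 by simp [ext0, hb]]
    exact ext0_nonneg μ h a

theorem rank_lt {d : ℕ} {C : Matrix (Fin 2 × Fin d) (Fin 2 × Fin d) ℂ} (hC : C.PosSemidef)
    (μ : Fin (2 * d) → ℝ) (hμ : Antitone μ)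
    (g : Fin (2 * d) ≃ Fin 2 × Fin d) (hg : ∀ k, μ k = hC.1.eigenvalues (g k)) (r : ℕ) :
    r < C.rank ↔ 0 < ext0 μ r := by
  have hpos : ∀ j, 0 ≤ μ j := fun j => by rw [hg]; exact hC.eigenvalues_nonneg _
  have hanti := ext0_anti μ hpos hμ
  have hnn := ext0_nonneg μ hpos
  have hrank : C.rank = (univ.filter fun j : Fin (2 * d) => μ j ≠ 0).card := by
    rw [hC.1.rank_eq_card_non_zero_eigs, ← Fintype.card_subtype]
    apply Fintype.card_congr
    refine (Equiv.subtypeEquiv g ?_).symm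
    intro j
    rw [hg]
  rw [hrank]
  constructor
  · intro h
    by_contra hle
    have hz : ext0 μ r = 0 := le_antisymm (not_lt.1 hle) (hnn r)
    have hsub : (univ.filter fun j : Fin (2 * d) => μ j ≠ 0) ⊆ firstS (2 * d) r := by
      intro j
      simp only [firstS, Finset.mem_filter, Finset.mem_univ, true_and]
      intro hj
      by_contra hjr
      apply hj
      have h1 := hanti (not_lt.1 hjr)
      rw [hz, ext0_fin] at h1
      exact le_antisymm h1 (hpos j)
    have h2 := Finset.card_le_card hsub
    have h3 : (firstS (2 * d) r).card ≤ r := by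
      unfold firstS
      rw [Fin.card_filter_val_lt]
      omega
    omega
  · intro h
    have hr : r < 2 * d := by
      by_contra hr
      simp [ext0, hr] at h
    have hsub : firstS (2 * d) (r + 1) ⊆ (univ.filter fun j : Fin (2 * d) => μ j ≠ 0) := by
      intro j
      simp only [firstS, Finset.mem_filter, Finset.mem_univ, true_and]
      intro hj
      have h1 := hanti (show (j : ℕ) ≤ r by omega)
      rw [ext0_fin] at h1
      exact (lt_of_lt_of_le h h1).ne'
    have h2 := Finset.card_le_card hsub
    rw [firstS_card (by omega)] at h2
    omega

theorem diag_entry {n m : Type*} [Fintype n] [Fintype m] [DecidableEq m] (W : Matrix n m ℂ)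
    (v : m → ℝ) (p : n) :
    (W * Matrix.diagonal (fun i => (v i : ℂ)) * Wᴴ) p p =
      ((∑ k, Complex.normSq (W p k) * v k : ℝ) : ℂ) := by
  rw [Matrix.mul_apply]
  push_cast
  apply Finset.sum_congr rfl
  intro k _
  rw [Matrix.mul_diagonal, Matrix.conjTranspose_apply, ← Complex.mul_conj]
  simp only [RCLike.star_def]
  ring

theorem unitary_row {n : Type*} [Fintype n] [DecidableEq n] {W : Matrix n n ℂ}
    (h : W ∈ Matrix.unitaryGroup n ℂ) (p : n) : ∑ k, Complex.normSq (W p k) = 1 := by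
  have h1 := congrFun (congrFun (Matrix.mem_unitaryGroup_iff.1 h) p) p
  have h2 := diag_entry W (fun _ => 1) p
  simp only [Complex.ofReal_one, Matrix.diagonal_one, Matrix.mul_one, mul_one] at h2
  rw [Matrix.star_eq_conjTranspose, h2, Matrix.one_apply_eq] at h1
  exact_mod_cast h1

theorem unitary_col {n : Type*} [Fintype n] [DecidableEq n] {W : Matrix n n ℂ}
    (h : W ∈ Matrix.unitaryGroup n ℂ) (k : n) : ∑ p, Complex.normSq (W p k) = 1 := by
  have h1 : Wᴴ ∈ Matrix.unitaryGroup n ℂ := by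
    rw [Matrix.mem_unitaryGroup_iff, Matrix.star_eq_conjTranspose, Matrix.conjTranspose_conjTranspose]
    exact Matrix.mem_unitaryGroup_iff'.1 h
  have h2 := unitary_row h1 k
  simpa [Matrix.conjTranspose_apply] using h2

theorem ptrace1_conj {d : ℕ} (X : Matrix (Fin 2 × Fin d) (Fin 2 × Fin d) ℂ)
    (V2 : Matrix (Fin 2) (Fin 2) ℂ) (V1 : Matrix (Fin d) (Fin d) ℂ)
    (h2 : V2 * V2ᴴ = 1) (s : Fin d) :
    ∑ i, ((V2 ⊗ₖ V1)ᴴ * X * (V2 ⊗ₖ V1)) (i, s) (i, s) = (V1ᴴ * ptrace1 X * V1) s s := by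
  have e : ∀ a b, ∑ i, V2 a i * star (V2 b i) = if a = b then 1 else 0 := by
    intro a b
    have := congrFun (congrFun h2 a) b
    rw [Matrix.mul_apply, Matrix.one_apply] at this
    simpa [Matrix.conjTranspose_apply] using this
  have l : ∀ i, ((V2 ⊗ₖ V1)ᴴ * X * (V2 ⊗ₖ V1)) (i, s) (i, s) =
      ∑ a, ∑ t, ∑ b, ∑ u, (V2 a i * star (V2 b i)) * (star (V1 u s) * X (b, u) (a, t) * V1 t s) := by
    intro i
    simp only [Matrix.mul_apply, Fintype.sum_prod_type, Matrix.conjTranspose_apply,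
      Matrix.kroneckerMap_apply, Finset.sum_mul, star_mul']
    refine Finset.sum_congr rfl fun a _ => Finset.sum_congr rfl fun t _ =>
      Finset.sum_congr rfl fun b _ => Finset.sum_congr rfl fun u _ => ?_
    ring
  simp only [l]
  rw [Finset.sum_comm]
  have l2 : ∀ a : Fin 2, ∑ i, ∑ t, ∑ b, ∑ u, (V2 a i * star (V2 b i)) * (star (V1 u s) * X (b, u) (a, t) * V1 t s)
      = ∑ t, ∑ u, (star (V1 u s) * X (a, u) (a, t) * V1 t s) := by
    intro a
    rw [Finset.sum_comm]
    refine Finset.sum_congr rfl fun t _ => ?_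
    rw [Finset.sum_comm]
    have : ∀ b, ∑ i, ∑ u, (V2 a i * star (V2 b i)) * (star (V1 u s) * X (b, u) (a, t) * V1 t s) =
        if a = b then ∑ u, (star (V1 u s) * X (b, u) (a, t) * V1 t s) else 0 := by
      intro b
      simp only [← Finset.mul_sum, ← Finset.sum_mul, e]
      split_ifs <;> simp
    simp only [this]
    simp
  simp only [l2]
  simp only [Matrix.mul_apply, ptrace1, Matrix.of_apply, Matrix.conjTranspose_apply,
    Finset.mul_sum, Finset.sum_mul]
  rw [Finset.sum_comm]
  refine Finset.sum_congr rfl fun t _ => ?_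
  rw [Finset.sum_comm]

theorem ptrace2_conj {d : ℕ} (X : Matrix (Fin 2 × Fin d) (Fin 2 × Fin d) ℂ)
    (V2 : Matrix (Fin 2) (Fin 2) ℂ) (V1 : Matrix (Fin d) (Fin d) ℂ)
    (h1 : V1 * V1ᴴ = 1) (i : Fin 2) :
    ∑ s, ((V2 ⊗ₖ V1)ᴴ * X * (V2 ⊗ₖ V1)) (i, s) (i, s) = (V2ᴴ * ptrace2 X * V2) i i := by
  have e : ∀ a b, ∑ s, V1 a s * star (V1 b s) = if a = b then 1 else 0 := by
    intro a b
    have := congrFun (congrFun h1 a) b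
    rw [Matrix.mul_apply, Matrix.one_apply] at this
    simpa [Matrix.conjTranspose_apply] using this
  have l : ∀ s, ((V2 ⊗ₖ V1)ᴴ * X * (V2 ⊗ₖ V1)) (i, s) (i, s) =
      ∑ a, ∑ t, ∑ b, ∑ u, (V1 t s * star (V1 u s)) * (star (V2 b i) * X (b, u) (a, t) * V2 a i) := by
    intro s
    simp only [Matrix.mul_apply, Fintype.sum_prod_type, Matrix.conjTranspose_apply,
      Matrix.kroneckerMap_apply, Finset.sum_mul, star_mul']
    refine Finset.sum_congr rfl fun a _ => Finset.sum_congr rfl fun t _ =>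
      Finset.sum_congr rfl fun b _ => Finset.sum_congr rfl fun u _ => ?_
    ring
  simp only [l]
  rw [Finset.sum_comm]
  have l2 : ∀ a : Fin 2, ∑ s, ∑ t, ∑ b, ∑ u, (V1 t s * star (V1 u s)) * (star (V2 b i) * X (b, u) (a, t) * V2 a i)
      = ∑ t, ∑ b, (star (V2 b i) * X (b, t) (a, t) * V2 a i) := by
    intro a
    rw [Finset.sum_comm]
    refine Finset.sum_congr rfl fun t _ => ?_
    rw [Finset.sum_comm]
    refine Finset.sum_congr rfl fun b _ => ?_
    rw [Finset.sum_comm]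
    simp only [← Finset.sum_mul, e]
    simp
  simp only [l2]
  simp only [Matrix.mul_apply, ptrace2, Matrix.of_apply, Matrix.conjTranspose_apply,
    Finset.mul_sum, Finset.sum_mul]
  refine Finset.sum_congr rfl fun t _ => ?_
  rw [Finset.sum_comm]

theorem spec' {n : Type*} [Fintype n] [DecidableEq n] {C : Matrix n n ℂ} (hC : C.IsHermitian) :
    ∃ V ∈ Matrix.unitaryGroup n ℂ, Vᴴ * C * V = Matrix.diagonal (fun i => (hC.eigenvalues i : ℂ)) := by
  obtain ⟨V, hV, hVC⟩ := spec hC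
  refine ⟨V, hV, ?_⟩
  have hVV : Vᴴ * V = 1 := Matrix.mem_unitaryGroup_iff'.1 hV
  conv_lhs => rw [hVC]
  calc Vᴴ * (V * Matrix.diagonal (fun i => (hC.eigenvalues i : ℂ)) * Vᴴ) * V
      = (Vᴴ * V) * Matrix.diagonal (fun i => (hC.eigenvalues i : ℂ)) * (Vᴴ * V) := by
        simp only [Matrix.mul_assoc]
    _ = _ := by rw [hVV, Matrix.one_mul, Matrix.mul_one]

theorem exists_good {d : ℕ} {C : Matrix (Fin 2 × Fin d) (Fin 2 × Fin d) ℂ} (hC : C.PosSemidef)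
    (μ : Fin (2 * d) → ℝ) (hμ : Antitone μ)
    (g : Fin (2 * d) ≃ Fin 2 × Fin d) (hg : ∀ k, μ k = hC.1.eigenvalues (g k))
    (U : Matrix (Fin 2 × Fin d) (Fin 2 × Fin d) ℂ)
    (hU : U ∈ Matrix.unitaryGroup (Fin 2 × Fin d) ℂ)
    (hU1 : (ptrace1 (U * C * Uᴴ)).IsHermitian) (hU2 : (ptrace2 (U * C * Uᴴ)).IsHermitian) :
    ∃ δ : Fin 2 × Fin d → ℝ, Good (ext0 μ) δ ∧
      Sum.elim hU1.eigenvalues hU2.eigenvalues = vec δ := by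
  have hpos : ∀ j, 0 ≤ μ j := fun j => by rw [hg]; exact hC.eigenvalues_nonneg _
  have hanti := ext0_anti μ hpos hμ
  obtain ⟨V, hV, hVC⟩ := spec hC.1
  obtain ⟨V1, hV1, hD1⟩ := spec' hU1
  obtain ⟨V2, hV2, hD2⟩ := spec' hU2
  have hK : V2 ⊗ₖ V1 ∈ Matrix.unitaryGroup (Fin 2 × Fin d) ℂ := Matrix.kronecker_mem_unitary hV2 hV1
  set K := V2 ⊗ₖ V1 with hKdef
  have hKs : Kᴴ ∈ Matrix.unitaryGroup (Fin 2 × Fin d) ℂ := by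
    rw [Matrix.mem_unitaryGroup_iff, Matrix.star_eq_conjTranspose, Matrix.conjTranspose_conjTranspose]
    exact Matrix.mem_unitaryGroup_iff'.1 hK
  set W := Kᴴ * U * V with hWdef
  have hW : W ∈ Matrix.unitaryGroup (Fin 2 × Fin d) ℂ := mul_mem (mul_mem hKs hU) hV
  have hM : Kᴴ * (U * C * Uᴴ) * K = W * Matrix.diagonal (fun i => (hC.1.eigenvalues i : ℂ)) * Wᴴ := by
    conv_lhs => rw [hVC]
    rw [hWdef, Matrix.conjTranspose_mul, Matrix.conjTranspose_mul, Matrix.conjTranspose_conjTranspose]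
    simp only [Matrix.mul_assoc]
  set δ : Fin 2 × Fin d → ℝ := fun p => ∑ k, Complex.normSq (W p k) * hC.1.eigenvalues k with hδ
  have hent : ∀ p, (Kᴴ * (U * C * Uᴴ) * K) p p = (δ p : ℂ) := by
    intro p
    rw [hM, diag_entry]
  refine ⟨δ, ?_, ?_⟩
  · have h1 : δ = fun p => ∑ j, Complex.normSq (W p (g j)) * ext0 μ j := by
      funext p
      rw [hδ]
      simp only
      rw [← Equiv.sum_comp g]
      simp only [ext0_fin, hg]
    rw [h1]
    apply good_of_ds hanti (fun p j => Complex.normSq (W p (g j)))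
    · intro p j; exact Complex.normSq_nonneg _
    · intro p
      rw [Equiv.sum_comp g (fun k => Complex.normSq (W p k))]
      exact unitary_row hW p
    · intro j
      exact unitary_col hW (g j)
  · have c1 : hU1.eigenvalues = colS δ := by
      funext s
      have := ptrace1_conj (U * C * Uᴴ) V2 V1 (Matrix.mem_unitaryGroup_iff.1 hV2) s
      rw [hD1, Matrix.diagonal_apply_eq, ← hKdef] at this
      simp only [hent] at this
      rw [colS]
      exact_mod_cast this.symm
    have c2 : hU2.eigenvalues = rowS δ := by
      funext s
      have := ptrace2_conj (U * C * Uᴴ) V2 V1 (Matrix.mem_unitaryGroup_iff.1 hV1) s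
      rw [hD2, Matrix.diagonal_apply_eq, ← hKdef] at this
      simp only [hent] at this
      rw [rowS]
      exact_mod_cast this.symm
    rw [c1, c2]; rfl

end QQ

namespace QQ

theorem ext0_eq {n : ℕ} (μ : Fin n → ℝ) (i : ℕ) (h : i < n) : ext0 μ i = μ ⟨i, h⟩ := by
  simp [ext0, h]

theorem lam0 {d : ℕ} (μ : Fin (2 * d) → ℝ) :
    (fun p : Fin 2 × Fin d => μ (finProdFinEquiv p)) = ext0 μ ∘ idx d 0 := by
  funext p
  obtain ⟨i, s⟩ := p
  rw [Function.comp, ← ext0_fin μ]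
  congr 1
  have hi : i = 0 ∨ i = 1 := by omega
  rcases hi with rfl | rfl <;> simp [finProdFinEquiv, idx] <;> omega

theorem lam1 {d : ℕ} (hd : 2 < d) (μ : Fin (2 * d) → ℝ) (c : ℝ)
    (hc : ∀ i, 2 ≤ i → i < 2 * d - 1 → ext0 μ i = c) (h1 : 1 < 2 * d) (h2 : d < 2 * d) :
    (fun p : Fin 2 × Fin d => μ (Equiv.swap (⟨1, h1⟩ : Fin (2 * d)) ⟨d, h2⟩ (finProdFinEquiv p))) =
      ext0 μ ∘ idx d 1 := by
  funext p
  obtain ⟨i, s⟩ := p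
  have hs := s.2
  rw [Function.comp, ← ext0_fin μ]
  have hi : i = 0 ∨ i = 1 := by omega
  rcases hi with rfl | rfl
  · have e : ((finProdFinEquiv ((0 : Fin 2), s) : Fin (2 * d)) : ℕ) = s := by
      simp [finProdFinEquiv]
    have hx : idx d 1 (0, s) = if (s : ℕ) < 1 then (s : ℕ) else 1 + s := by simp [idx]
    by_cases hs1 : (s : ℕ) = 1
    · have : (finProdFinEquiv ((0 : Fin 2), s) : Fin (2 * d)) = ⟨1, h1⟩ := Fin.ext (by rw [e, hs1])
      rw [this, Equiv.swap_apply_left, hx, if_neg (by omega), hs1]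
      rw [hc _ (by simp only; omega) (by simp only; omega), hc _ (by omega) (by omega)]
    · rw [Equiv.swap_apply_of_ne_of_ne, e, hx]
      · split_ifs with h
        · rfl
        · rw [hc _ (by omega) (by omega), hc _ (by omega) (by omega)]
      · intro h; have := congrArg Fin.val h; rw [e] at this; exact hs1 this
      · intro h; have := congrArg Fin.val h; rw [e] at this; simp only at this; omega
  · have e : ((finProdFinEquiv ((1 : Fin 2), s) : Fin (2 * d)) : ℕ) = d + s := by
      simp [finProdFinEquiv]; omega
    have hx : idx d 1 (1, s) = if (s : ℕ) < 1 then 1 + (s : ℕ) else d + s := by simp [idx]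
    by_cases hs1 : (s : ℕ) = 0
    · have : (finProdFinEquiv ((1 : Fin 2), s) : Fin (2 * d)) = ⟨d, h2⟩ := Fin.ext (by rw [e, hs1]; rfl)
      rw [this, Equiv.swap_apply_right, hx, if_pos (by omega), hs1]
    · rw [Equiv.swap_apply_of_ne_of_ne, e, hx, if_neg (by omega)]
      · intro h; have := congrArg Fin.val h; rw [e] at this; simp only at this; omega
      · intro h; have := congrArg Fin.val h; rw [e] at this; simp only at this; omega

theorem diag_herm {n : Type*} [DecidableEq n] (v : n → ℝ) :
    (Matrix.diagonal (fun i => (v i : ℂ))).IsHermitian := by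
  rw [Matrix.IsHermitian, Matrix.diagonal_conjTranspose]
  congr 1
  funext i
  simp

theorem hypA_of {d : ℕ} (hd : 2 < d)
    {C : Matrix (Fin 2 × Fin d) (Fin 2 × Fin d) ℂ} (hC : C.PosSemidef)
    (μ : Fin (2 * d) → ℝ)
    (g : Fin (2 * d) ≃ Fin 2 × Fin d) (hg : ∀ k, μ k = hC.1.eigenvalues (g k))
    (hA : ∀ U : Matrix (Fin 2 × Fin d) (Fin 2 × Fin d) ℂ,
        U ∈ Matrix.unitaryGroup (Fin 2 × Fin d) ℂ →
        ∃ D : Matrix (Fin 2 × Fin d) (Fin 2 × Fin d) ℂ, D.IsDiag ∧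
          (∃ gp : Equiv.Perm (Fin 2 × Fin d), ∀ p, D p p = (hC.1.eigenvalues (gp p) : ℂ)) ∧
          ∀ (hU1 : (ptrace1 (U * C * Uᴴ)).IsHermitian)
            (hU2 : (ptrace2 (U * C * Uᴴ)).IsHermitian)
            (hD1 : (ptrace1 D).IsHermitian) (hD2 : (ptrace2 D).IsHermitian),
            Majorizes (Sum.elim hU1.eigenvalues hU2.eigenvalues)
              (Sum.elim hD1.eigenvalues hD2.eigenvalues)) :
    HypA d hd (ext0 μ) := by
  intro m hm t ht0 ht1
  obtain ⟨U, hU, hUd, hUo⟩ := exists_rot hC.1 ((idxE hm).trans g) (1, ⟨0, by omega⟩)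
    (0, ⟨d - 1, by omega⟩) (by simp) (by simp [Fin.ext_iff]; omega) t ht0 ht1
  obtain ⟨D, hD, ⟨gp, hgp⟩, hmaj⟩ := hA U hU
  have hDo : ∀ p q : Fin 2 × Fin d, p ≠ q → (p.1 = q.1 ∨ p.2 = q.2) → D p q = 0 :=
    fun p q h _ => hD h
  obtain ⟨u1, u2⟩ := ptrace_diag _ _ hUd hUo
  obtain ⟨v1, v2⟩ := ptrace_diag D (fun p => hC.1.eigenvalues (gp p)) hgp hDo
  have hU1 : (ptrace1 (U * C * Uᴴ)).IsHermitian := by rw [u1]; exact diag_herm _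
  have hU2 : (ptrace2 (U * C * Uᴴ)).IsHermitian := by rw [u2]; exact diag_herm _
  have hD1 : (ptrace1 D).IsHermitian := by rw [v1]; exact diag_herm _
  have hD2 : (ptrace2 D).IsHermitian := by rw [v2]; exact diag_herm _
  obtain ⟨e1, he1⟩ := eig_vec _ _ hUd hUo hU1 hU2
  obtain ⟨e2, he2⟩ := eig_vec D (fun p => hC.1.eigenvalues (gp p)) hgp hDo hD1 hD2
  have hfin := hmaj hU1 hU2 hD1 hD2
  rw [he1, he2, maj_comp] at hfin
  refine ⟨gp.trans g.symm, ?_⟩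
  have c1 : (fun z => hC.1.eigenvalues (((idxE hm).trans g) z)) = ext0 μ ∘ idx d m := by
    funext z
    rw [Equiv.trans_apply, ← hg, ← ext0_fin μ]
    rfl
  have c2 : (fun p => hC.1.eigenvalues (gp p)) = fun p => ext0 μ ((gp.trans g.symm) p) := by
    funext p
    rw [ext0_fin, hg, Equiv.trans_apply, Equiv.apply_symm_apply]
  rw [c1, c2] at hfin
  exact hfin.1

theorem a_of {d : ℕ}
    {C : Matrix (Fin 2 × Fin d) (Fin 2 × Fin d) ℂ} (hC : C.PosSemidef)
    (μ : Fin (2 * d) → ℝ)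
    (g : Fin (2 * d) ≃ Fin 2 × Fin d) (hg : ∀ k, μ k = hC.1.eigenvalues (g k))
    (ρ : Fin 2 × Fin d ≃ Fin (2 * d)) {ι : Type*} [Fintype ι] (x : ι → ℝ)
    (h : Majorizes x (vec (fun p => μ (ρ p)))) :
    ∃ D : Matrix (Fin 2 × Fin d) (Fin 2 × Fin d) ℂ, D.IsDiag ∧
      (∃ gp : Equiv.Perm (Fin 2 × Fin d), ∀ p, D p p = (hC.1.eigenvalues (gp p) : ℂ)) ∧
      ∀ (hD1 : (ptrace1 D).IsHermitian) (hD2 : (ptrace2 D).IsHermitian),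
        Majorizes x (Sum.elim hD1.eigenvalues hD2.eigenvalues) := by
  refine ⟨Matrix.diagonal (fun p => ((μ (ρ p) : ℝ) : ℂ)), Matrix.isDiag_diagonal _,
    ⟨ρ.trans g, ?_⟩, ?_⟩
  · intro p
    rw [Matrix.diagonal_apply_eq, hg]
    rfl
  · intro hD1 hD2
    obtain ⟨e, he⟩ := eig_vec _ (fun p => μ (ρ p)) (fun p => Matrix.diagonal_apply_eq _ _)
      (fun p q hpq _ => Matrix.diagonal_apply_ne _ hpq) hD1 hD2
    rw [he]
    exact (maj_comp (Equiv.refl _) e x _).2 h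

/-- hermitian conjugates have hermitian partial traces -/
theorem ptrace_herm {d : ℕ} {X : Matrix (Fin 2 × Fin d) (Fin 2 × Fin d) ℂ} (hX : X.IsHermitian) :
    (ptrace1 X).IsHermitian ∧ (ptrace2 X).IsHermitian := by
  have h : ∀ p q, star (X p q) = X q p := fun p q => hX.apply q p
  constructor
  · ext s t
    simp only [Matrix.conjTranspose_apply, ptrace1, Matrix.of_apply, star_sum, h]
  · ext s t
    simp only [Matrix.conjTranspose_apply, ptrace2, Matrix.of_apply, star_sum, h]

end QQ

theorem qubit_qudit_characterization (d : ℕ) (hd : 2 < d)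
    (C : Matrix (Fin 2 × Fin d) (Fin 2 × Fin d) ℂ) (hC : C.PosSemidef)
    (htr1 : (ptrace1 C).IsHermitian) (htr2 : (ptrace2 C).IsHermitian)
    -- `μ` lists the eigenvalues of `C` in decreasing order
    (μ : Fin (2 * d) → ℝ) (hμ : Antitone μ)
    (g : Fin (2 * d) ≃ Fin 2 × Fin d) (hg : ∀ k, μ k = hC.1.eigenvalues (g k)) :
    -- (A) ↔ (B)
    ((∀ U : Matrix (Fin 2 × Fin d) (Fin 2 × Fin d) ℂ,
        U ∈ Matrix.unitaryGroup (Fin 2 × Fin d) ℂ →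
        ∃ D : Matrix (Fin 2 × Fin d) (Fin 2 × Fin d) ℂ, D.IsDiag ∧
          (∃ gp : Equiv.Perm (Fin 2 × Fin d), ∀ p, D p p = (hC.1.eigenvalues (gp p) : ℂ)) ∧
          ∀ (hU1 : (ptrace1 (U * C * Uᴴ)).IsHermitian)
            (hU2 : (ptrace2 (U * C * Uᴴ)).IsHermitian)
            (hD1 : (ptrace1 D).IsHermitian) (hD2 : (ptrace2 D).IsHermitian),
            Majorizes (Sum.elim hU1.eigenvalues hU2.eigenvalues)
              (Sum.elim hD1.eigenvalues hD2.eigenvalues)) ↔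
      (C.rank ≤ 3 ∨
        ((C.rank = 2 * d - 1 ∨ C.rank = 2 * d) ∧
          (∀ i j : Fin (2 * d), 1 ≤ (i : ℕ) → (i : ℕ) ≤ 2 * d - 2 →
            1 ≤ (j : ℕ) → (j : ℕ) ≤ 2 * d - 2 → μ i = μ j)) ∨
        ((C.rank = 2 * d - 1 ∨ C.rank = 2 * d) ∧
          (∀ i j : Fin (2 * d), 2 ≤ (i : ℕ) → (i : ℕ) ≤ 2 * d - 2 →
            2 ≤ (j : ℕ) → (j : ℕ) ≤ 2 * d - 2 → μ i = μ j) ∧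
          2 * ((d : ℝ) - 2) * μ ⟨2, by omega⟩ + μ ⟨2 * d - 1, by omega⟩ ≤ μ ⟨1, by omega⟩) ∨
        (d = 3 ∧ C.rank = 5 ∧
          μ ⟨2, by omega⟩ = μ ⟨3, by omega⟩ ∧ μ ⟨3, by omega⟩ = μ ⟨4, by omega⟩))) ∧
    -- moreover, in cases (1), (2), (4) `D` can be taken to be `Λ`
    ((C.rank ≤ 3 ∨
        ((C.rank = 2 * d - 1 ∨ C.rank = 2 * d) ∧
          (∀ i j : Fin (2 * d), 1 ≤ (i : ℕ) → (i : ℕ) ≤ 2 * d - 2 →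
            1 ≤ (j : ℕ) → (j : ℕ) ≤ 2 * d - 2 → μ i = μ j)) ∨
        (d = 3 ∧ C.rank = 5 ∧
          μ ⟨2, by omega⟩ = μ ⟨3, by omega⟩ ∧ μ ⟨3, by omega⟩ = μ ⟨4, by omega⟩)) →
      ∀ U : Matrix (Fin 2 × Fin d) (Fin 2 × Fin d) ℂ,
        U ∈ Matrix.unitaryGroup (Fin 2 × Fin d) ℂ →
        ∀ (hU1 : (ptrace1 (U * C * Uᴴ)).IsHermitian)
          (hU2 : (ptrace2 (U * C * Uᴴ)).IsHermitian),
          Majorizes (Sum.elim hU1.eigenvalues hU2.eigenvalues)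
            (Sum.elim (fun s : Fin d => ∑ i : Fin 2, μ (finProdFinEquiv (i, s)))
                      (fun j : Fin 2 => ∑ s : Fin d, μ (finProdFinEquiv (j, s))))) ∧
    -- and in case (3) `D` can be taken to be `Λ` or `Λ` with entries 2 and d+1 swapped
    (((C.rank = 2 * d - 1 ∨ C.rank = 2 * d) ∧
        (∀ i j : Fin (2 * d), 2 ≤ (i : ℕ) → (i : ℕ) ≤ 2 * d - 2 →
          2 ≤ (j : ℕ) → (j : ℕ) ≤ 2 * d - 2 → μ i = μ j) ∧
        2 * ((d : ℝ) - 2) * μ ⟨2, by omega⟩ + μ ⟨2 * d - 1, by omega⟩ ≤ μ ⟨1, by omega⟩) →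
      ∀ U : Matrix (Fin 2 × Fin d) (Fin 2 × Fin d) ℂ,
        U ∈ Matrix.unitaryGroup (Fin 2 × Fin d) ℂ →
        ∀ (hU1 : (ptrace1 (U * C * Uᴴ)).IsHermitian)
          (hU2 : (ptrace2 (U * C * Uᴴ)).IsHermitian),
          Majorizes (Sum.elim hU1.eigenvalues hU2.eigenvalues)
            (Sum.elim (fun s : Fin d => ∑ i : Fin 2, μ (finProdFinEquiv (i, s)))
                      (fun j : Fin 2 => ∑ s : Fin d, μ (finProdFinEquiv (j, s)))) ∨
          Majorizes (Sum.elim hU1.eigenvalues hU2.eigenvalues)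
            (Sum.elim
              (fun s : Fin d => ∑ i : Fin 2,
                μ (Equiv.swap (⟨1, by omega⟩ : Fin (2 * d)) ⟨d, by omega⟩ (finProdFinEquiv (i, s))))
              (fun j : Fin 2 => ∑ s : Fin d,
                μ (Equiv.swap (⟨1, by omega⟩ : Fin (2 * d)) ⟨d, by omega⟩ (finProdFinEquiv (j, s)))))) := by
  have hpos : ∀ j, 0 ≤ μ j := fun j => by rw [hg]; exact hC.eigenvalues_nonneg _
  have hanti := QQ.ext0_anti μ hpos hμ
  have hnn := QQ.ext0_nonneg μ hpos
  have hrk := QQ.rank_lt hC μ hμ g hg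
  set L := QQ.ext0 μ with hLdef
  have hz : ∀ i, C.rank ≤ i → L i = 0 := by
    intro i hi
    by_contra hne
    have := (hrk i).2 (lt_of_le_of_ne (hnn i) (Ne.symm hne))
    omega
  have hLμ : ∀ i (h : i < 2 * d), L i = μ ⟨i, h⟩ := fun i h => QQ.ext0_eq μ i h
  -- constancy
  have hconst : ∀ a : ℕ, a < 2 * d - 1 → (∀ i j : Fin (2 * d), a ≤ (i : ℕ) → (i : ℕ) ≤ 2 * d - 2 →
      a ≤ (j : ℕ) → (j : ℕ) ≤ 2 * d - 2 → μ i = μ j) →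
      ∀ i, a ≤ i → i < 2 * d - 1 → L i = L a := by
    intro a ha h i hi hi2
    rw [hLμ i (by omega), hLμ a (by omega)]
    exact h _ _ hi (by simp only; omega) le_rfl (by simp only; omega)
  -- cases 1, 2, 4
  have M124 : (C.rank ≤ 3 ∨
        ((C.rank = 2 * d - 1 ∨ C.rank = 2 * d) ∧
          (∀ i j : Fin (2 * d), 1 ≤ (i : ℕ) → (i : ℕ) ≤ 2 * d - 2 →
            1 ≤ (j : ℕ) → (j : ℕ) ≤ 2 * d - 2 → μ i = μ j)) ∨
        (d = 3 ∧ C.rank = 5 ∧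
          μ ⟨2, by omega⟩ = μ ⟨3, by omega⟩ ∧ μ ⟨3, by omega⟩ = μ ⟨4, by omega⟩)) →
      ∀ U : Matrix (Fin 2 × Fin d) (Fin 2 × Fin d) ℂ,
        U ∈ Matrix.unitaryGroup (Fin 2 × Fin d) ℂ →
        ∀ (hU1 : (ptrace1 (U * C * Uᴴ)).IsHermitian)
          (hU2 : (ptrace2 (U * C * Uᴴ)).IsHermitian),
          Majorizes (Sum.elim hU1.eigenvalues hU2.eigenvalues)
            (QQ.vec (fun p => μ (finProdFinEquiv p))) := by
    intro hB U hU hU1 hU2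
    obtain ⟨δ, hG, hE⟩ := QQ.exists_good hC μ hμ g hg U hU hU1 hU2
    rw [hE, QQ.lam0]
    rcases hB with h | ⟨-, h⟩ | ⟨h3, hr, h23, h34⟩
    · exact QQ.case1 hd hnn (fun i hi => hz i (by omega)) hG
    · exact QQ.case2 hd hnn (hconst 1 (by omega) h) hG
    · rw [← hLμ, ← hLμ] at h23 h34
      have h5 : L 5 = 0 := hz 5 hr.le
      rw [← hLdef] at hG ⊢
      clear_value L
      subst h3
      exact QQ.case4 hnn h23 h34 h5 hG
  -- case 3
  have M3 : ((C.rank = 2 * d - 1 ∨ C.rank = 2 * d) ∧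
        (∀ i j : Fin (2 * d), 2 ≤ (i : ℕ) → (i : ℕ) ≤ 2 * d - 2 →
          2 ≤ (j : ℕ) → (j : ℕ) ≤ 2 * d - 2 → μ i = μ j) ∧
        2 * ((d : ℝ) - 2) * μ ⟨2, by omega⟩ + μ ⟨2 * d - 1, by omega⟩ ≤ μ ⟨1, by omega⟩) →
      ∀ U : Matrix (Fin 2 × Fin d) (Fin 2 × Fin d) ℂ,
        U ∈ Matrix.unitaryGroup (Fin 2 × Fin d) ℂ →
        ∀ (hU1 : (ptrace1 (U * C * Uᴴ)).IsHermitian)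
          (hU2 : (ptrace2 (U * C * Uᴴ)).IsHermitian),
          Majorizes (Sum.elim hU1.eigenvalues hU2.eigenvalues)
            (QQ.vec (fun p => μ (finProdFinEquiv p))) ∨
          Majorizes (Sum.elim hU1.eigenvalues hU2.eigenvalues)
            (QQ.vec (fun p => μ (Equiv.swap (⟨1, by omega⟩ : Fin (2 * d)) ⟨d, by omega⟩
              (finProdFinEquiv p)))) := by
    rintro ⟨-, h, hb⟩ U hU hU1 hU2
    obtain ⟨δ, hG, hE⟩ := QQ.exists_good hC μ hμ g hg U hU hU1 hU2
    have hc := hconst 2 (by omega) h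
    rw [hE, QQ.lam0, QQ.lam1 hd μ (L 2) hc]
    rw [← hLμ, ← hLμ, ← hLμ] at hb
    exact QQ.case3 hd hnn hc hb hG
  refine ⟨⟨?_, ?_⟩, M124, M3⟩
  · intro hA
    have HA := QQ.hypA_of hd hC μ g hg hA
    by_cases hr3 : C.rank ≤ 3
    · exact Or.inl hr3
    right
    have h3 : 0 < L 3 := (hrk 3).1 (by omega)
    have s2 : L 2 = L (2 + d - 1) := QQ.step hd hnn hanti HA le_rfl (by omega) h3
    have hLd : L (2 + d - 1) ≤ L d := hanti (by omega)
    have h32 : L 3 ≤ L 2 := hanti (by omega)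
    have s3 : L (d - 1) = L (d - 1 + d - 1) := by
      refine QQ.step hd hnn hanti HA (by omega) le_rfl ?_
      rw [show d - 1 + 1 = d by omega]
      linarith
    have e2 : L (d - 1 + d - 1) = L 2 := by
      have a1 : L (2 + d - 1) ≤ L (d - 1) := hanti (by omega)
      have a2 : L (d - 1) ≤ L 2 := hanti (by omega)
      linarith
    have hc : ∀ i, 2 ≤ i → i < 2 * d - 1 → L i = L 2 := by
      intro i hi hi2
      have a1 : L (d - 1 + d - 1) ≤ L i := hanti (by omega)
      have a2 : L i ≤ L 2 := hanti hi
      linarith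
    have hcpos : 0 < L 2 := by linarith
    have hr1 : 2 * d - 2 < C.rank := (hrk _).2 (by rw [hc _ (by omega) (by omega)]; exact hcpos)
    have hr2 : C.rank ≤ 2 * d := by
      by_contra hlt
      have := (hrk (2 * d)).1 (by omega)
      simp [hLdef, QQ.ext0] at this
    have hr : C.rank = 2 * d - 1 ∨ C.rank = 2 * d := by omega
    have h21 : L 2 ≤ L 1 := hanti (by omega)
    rcases h21.eq_or_lt with heq | hlt
    · left
      refine ⟨hr, ?_⟩
      have : ∀ i : Fin (2 * d), 1 ≤ (i : ℕ) → (i : ℕ) ≤ 2 * d - 2 → μ i = L 2 := by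
        intro i hi hi2
        rw [← QQ.ext0_fin μ i]
        rcases Nat.lt_or_ge 1 (i : ℕ) with h | h
        · exact hc _ h (by omega)
        · rw [show (i : ℕ) = 1 by omega]; exact heq.symm
      intro i j hi hi2 hj hj2
      rw [this i hi hi2, this j hj hj2]
    right
    by_cases hb : 2 * ((d : ℝ) - 2) * L 2 + L (2 * d - 1) ≤ L 1
    · left
      refine ⟨hr, ?_, ?_⟩
      · intro i j hi hi2 hj hj2
        rw [← QQ.ext0_fin μ i, ← QQ.ext0_fin μ j]
        exact (hc _ hi (by omega)).trans (hc _ hj (by omega)).symm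
      · rw [← hLμ, ← hLμ, ← hLμ]; exact hb
    right
    have hde : ¬ 0 < ((d : ℝ) - 3) * L 2 + L (2 * d - 1) := fun hde =>
      QQ.last hd hnn hanti HA hc hcpos hlt (not_le.1 hb) hde
    have hd3 : d = 3 := by
      by_contra hne
      apply hde
      have h4 : (4 : ℝ) ≤ d := by exact_mod_cast (by omega : 4 ≤ d)
      have := hnn (2 * d - 1)
      nlinarith
    have hl5 : L (2 * d - 1) = 0 := by
      refine le_antisymm ?_ (hnn _)
      have hd3' : (d : ℝ) = 3 := by exact_mod_cast hd3
      rw [hd3'] at hde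
      linarith
    have hr5 : ¬ 2 * d - 1 < C.rank := by
      rw [hrk, hl5]
      exact lt_irrefl _
    refine ⟨hd3, by omega, ?_, ?_⟩
    · rw [← hLμ, ← hLμ, hc 3 (by omega) (by omega)]
    · rw [← hLμ, ← hLμ, hc 3 (by omega) (by omega), hc 4 (by omega) (by omega)]
  · intro hB U hU
    have hX : (U * C * Uᴴ).IsHermitian := Matrix.isHermitian_mul_mul_conjTranspose U hC.1
    obtain ⟨hU1, hU2⟩ := QQ.ptrace_herm hX
    have hmaj : Majorizes (Sum.elim hU1.eigenvalues hU2.eigenvalues)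
            (QQ.vec (fun p => μ (finProdFinEquiv p))) ∨
          Majorizes (Sum.elim hU1.eigenvalues hU2.eigenvalues)
            (QQ.vec (fun p => μ (Equiv.swap (⟨1, by omega⟩ : Fin (2 * d)) ⟨d, by omega⟩
              (finProdFinEquiv p)))) := by
      rcases hB with h | h | h | h
      · exact Or.inl (M124 (Or.inl h) U hU hU1 hU2)
      · exact Or.inl (M124 (Or.inr (Or.inl h)) U hU hU1 hU2)
      · exact M3 h U hU hU1 hU2
      · exact Or.inl (M124 (Or.inr (Or.inr h)) U hU hU1 hU2)
    rcases hmaj with h | h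
    · obtain ⟨D, h1, h2, h3⟩ := QQ.a_of hC μ g hg finProdFinEquiv _ h
      exact ⟨D, h1, h2, fun _ _ => h3⟩
    · obtain ⟨D, h1, h2, h3⟩ := QQ.a_of hC μ g hg (finProdFinEquiv.trans
        (Equiv.swap (⟨1, by omega⟩ : Fin (2 * d)) ⟨d, by omega⟩)) _ h
      exact ⟨D, h1, h2, fun _ _ => h3⟩
end
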